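/- arXiv:2604.10964 — 2 statements merged into one kernel-verified Lean document; each statement's English description precedes it below -/
import Mathlib

section
/- Let I ⊆ ℤ₂[[x₁,…,x₆]] be the square-free monomial ideal I = (x₁x₂x₃, x₁x₂x₄, x₁x₃x₅, x₁x₄x₆, x₁x₅x₆, x₂x₃x₆, x₂x₄x₅, x₂x₅x₆, x₃x₄x₅, x₃x₄x₆), let S = ℤ₂[[x₁,…,x₆, y₁,…,y₆]], and let J = IS + (y₁, y₂)S. Then the local cohomology module H⁷_J(S) vanishes: H⁷_J(S) = 0. -/
/-!
The vanishing follows from two facts.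

* `J` is generated up to radical by the six elements of `Jgens`. The inclusion of their ideal in `J`
  holds because four vertices never span a face of the triangulation, so every squarefree monomial of
  degree at least `4` lies in `I`. For the converse one argues modulo a prime containing `Jgens`
  (Schmitt–Vogel): in a domain, the vanishing of the elementary symmetric polynomials of degrees
  `6`, `5`, `4` forces, one after the other, three of the six variables to vanish. Then at most one
  of the ten cubic generators of `I` can be nonzero, and as their sum is zero they all vanish
  (`radical_J`). Local cohomology depends only on the radical.

* Over a Noetherian ring, `H^(n+1)_I = 0` whenever `I` is generated by at most `n` elements
  (`subsingleton_localCohomology_ofList`). Let `E` be an injective resolution of `M`. An induction on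
  the generators, in which Artin–Rees allows division by powers of the new generator inside the torsion
  of an injective module (`exists_divide`), shows that in degree `n + 1` every `I`-power torsion
  cocycle of `E` has an `I`-power torsion primitive (`exists_tors_primitive`). Mathlib defines local
  cohomology as the colimit of `Ext^(n+1)(R / I^k, M)` computed with projective resolutions of the
  modules `R / I^k`; a chase through the double complexes `Hom(P k, E)`, performed along the whole
  system in `k` (`Dies.step`, `Dies.base`, `Dies.target`), transports the previous statement to the
  fact that each class in `Ext^(n+1)(R / I^k, M)` maps to zero in some `Ext^(n+1)(R / I^l, M)`.
-/

/-!
STATEMENT 4: Let `I ⊆ ℤ₂[[x₁,…,x₆]]` be the monomial ideal of the standard triangulation of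
ℝP², let `S = ℤ₂[[x₁,…,x₆,y₁,…,y₆]]` and `J = IS + (y₁,y₂)S`.  Then `H⁷_J(S) = 0`.
Variables are 0-indexed: `xᵢ₊₁ = X i`, `yⱼ₊₁ = X (6+j)`.
-/

noncomputable section

/-- The power series ring `S = ℤ₂[[x₁,…,x₆,y₁,…,y₆]]` in twelve variables. -/
abbrev S : Type := MvPowerSeries (Fin 12) ℤ_[2]

/-- `x i` is the variable `xᵢ₊₁`. -/
def x (i : Fin 6) : S := MvPowerSeries.X (i.castAdd 6)

/-- `y j` is the variable `yⱼ₊₁`. -/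
def y (j : Fin 6) : S := MvPowerSeries.X (j.natAdd 6)

/-- The generators of the monomial ideal `I` (standard triangulation of ℝP²),
viewed in `S`; so their span in `S` is `IS`. -/
def Igens : Set S :=
  {x 0 * x 1 * x 2, x 0 * x 1 * x 3, x 0 * x 2 * x 4, x 0 * x 3 * x 5,
   x 0 * x 4 * x 5, x 1 * x 2 * x 5, x 1 * x 3 * x 4, x 1 * x 4 * x 5,
   x 2 * x 3 * x 4, x 2 * x 3 * x 5}

/-- `J = IS + (y₁, y₂)S`. -/
def J : Ideal S := Ideal.span Igens + Ideal.span {y 0, y 1}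

/-! ### Power-torsion cocycles in an exact complex of injectives -/

section Torsion
variable {R : Type} [CommRing R]

/-- `x` is `I`-power torsion: it is annihilated by some power of `I`, that is, `x ∈ Γ_I(M)`. -/
def IsPowTors (I : Ideal R) {M : Type} [AddCommGroup M] [Module R M] (x : M) : Prop :=
  ∃ k : ℕ, ∀ a ∈ I ^ k, a • x = 0

variable {M N : Type} [AddCommGroup M] [Module R M] [AddCommGroup N] [Module R N]

lemma IsPowTors.sub {I : Ideal R} {x y : M} (hx : IsPowTors I x) (hy : IsPowTors I y) :
    IsPowTors I (x - y) := by
  obtain ⟨k, hk⟩ := hx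
  obtain ⟨l, hl⟩ := hy
  refine ⟨k + l, fun a ha => ?_⟩
  rw [smul_sub, hk a (Ideal.pow_le_pow_right (by omega) ha),
    hl a (Ideal.pow_le_pow_right (by omega) ha), sub_zero]

lemma IsPowTors.smul {I : Ideal R} {x : M} (hx : IsPowTors I x) (r : R) :
    IsPowTors I (r • x) := by
  obtain ⟨k, hk⟩ := hx
  exact ⟨k, fun a ha => by rw [smul_comm, hk a ha, smul_zero]⟩

lemma IsPowTors.map {I : Ideal R} {x : M} (hx : IsPowTors I x) (f : M →ₗ[R] N) :
    IsPowTors I (f x) := by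
  obtain ⟨k, hk⟩ := hx
  exact ⟨k, fun a ha => by rw [← map_smul, hk a ha, map_zero]⟩

lemma IsPowTors.anti {I I' : Ideal R} (h : I' ≤ I) {x : M} (hx : IsPowTors I x) :
    IsPowTors I' x := by
  obtain ⟨k, hk⟩ := hx
  exact ⟨k, fun a ha => hk a (Ideal.pow_right_mono h k ha)⟩

/-- Being `I`-power torsion and `f`-power torsion suffices to be `(f, I)`-power torsion, because
`(f, I)^(m + k) ⊆ (f)^m + I^k`. -/
lemma isPowTors_sup {I : Ideal R} {f : R} {x : M} (hx : IsPowTors I x) {m : ℕ}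
    (hm : f ^ m • x = 0) : IsPowTors (Ideal.span {f} ⊔ I) x := by
  obtain ⟨k, hk⟩ := hx
  refine ⟨m + k, fun a ha => ?_⟩
  obtain ⟨b, hb, c, hc, rfl⟩ := Submodule.mem_sup.1 (Ideal.sup_pow_add_le_pow_sup_pow ha)
  rw [Ideal.span_singleton_pow, Ideal.mem_span_singleton'] at hb
  obtain ⟨b, rfl⟩ := hb
  rw [add_smul, hk c hc, mul_smul, hm, smul_zero, add_zero]

lemma IsPowTors.exists_pow_smul {f : R} {I : Ideal R} {x : M}
    (hx : IsPowTors (Ideal.span {f} ⊔ I) x) : ∃ m : ℕ, f ^ m • x = 0 := by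
  obtain ⟨k, hk⟩ := hx
  exact ⟨k, hk _ (Ideal.pow_mem_pow
    (Ideal.mem_sup_left (Ideal.mem_span_singleton_self f)) k)⟩

/-- The chain of annihilators of the powers of `f` is stationary. -/
lemma exists_bound_annihilator [IsNoetherianRing R] (f : R) :
    ∃ m : ℕ, ∀ (n : ℕ) (r : R), r * f ^ n = 0 → r * f ^ m = 0 := by
  let A : ℕ →o Ideal R :=
    ⟨fun n => LinearMap.ker (LinearMap.mulRight R (f ^ n)), by
      intro i j hij r hr
      simp only [LinearMap.mem_ker, LinearMap.mulRight_apply] at hr ⊢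
      obtain ⟨c, rfl⟩ := Nat.exists_eq_add_of_le hij
      rw [pow_add, ← mul_assoc, hr, zero_mul]⟩
  obtain ⟨m, hm⟩ := monotone_stabilizes_iff_noetherian.2 (inferInstanceAs (IsNoetherian R R)) A
  refine ⟨m, fun n r hr => ?_⟩
  have h1 : r ∈ A n := by
    change LinearMap.mulRight R (f ^ n) r = 0
    simpa using hr
  have h2 : r ∈ A m := by
    rcases le_total m n with h | h
    · rw [hm n h]; exact h1
    · exact A.monotone h h1
  change LinearMap.mulRight R (f ^ m) r = 0 at h2
  simpa using h2

/-- In an injective module over a Noetherian ring, an `I`-power torsion element is divisible by every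
power of `f` within the `I`-power torsion, up to `f`-power torsion (equivalently, the localization
map `Γ_I(M) → Γ_I(M)_f` is surjective). By Artin–Rees, `a f^(m+k) ↦ a f^m w` is well defined on the
image of `R f^(m+k)` in a quotient `R / I^N` with `N` large; the extension of this map to `R / I^N`,
evaluated at `1`, is the required element. -/
lemma exists_divide [IsNoetherianRing R] [Module.Injective R M] (I : Ideal R) (f : R) (k : ℕ)
    {w : M} (hw : IsPowTors I w) :
    ∃ (v : M) (m : ℕ), IsPowTors I v ∧ f ^ (m + k) • v = f ^ m • w := by
  obtain ⟨s, hs⟩ := hw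
  obtain ⟨m, hm⟩ := exists_bound_annihilator f
  -- Artin–Rees for the ideal generated by `f ^ (m + k)`
  obtain ⟨c, hc⟩ := Ideal.exists_pow_inf_eq_pow_smul I (M := R) (Ideal.span {f ^ (m + k)})
  set F := f ^ (m + k) with hF
  have key : ∀ a : R, a * F ∈ I ^ (c + s) → a • f ^ m • w = 0 := by
    intro a ha
    have h1 : a * F ∈ (I ^ (c + s) • ⊤ : Submodule R R) ⊓ Ideal.span {F} :=
      ⟨by simpa using ha, Ideal.mem_span_singleton'.2 ⟨a, rfl⟩⟩
    rw [hc _ (by omega), Nat.add_sub_cancel_left] at h1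
    have h2 := (smul_mono_right (I ^ s) inf_le_right :
      I ^ s • (I ^ c • ⊤ ⊓ Ideal.span {F}) ≤ I ^ s • Ideal.span {F}) h1
    rw [smul_eq_mul, Ideal.mem_mul_span_singleton] at h2
    obtain ⟨b, hb, hab⟩ := h2
    have h3 : (a - b) * f ^ m = 0 := hm (m + k) _ (by rw [← hF, sub_mul, hab, sub_self])
    have h4 : a * f ^ m = b * f ^ m := by rwa [sub_mul, sub_eq_zero] at h3
    rw [← mul_smul, h4, mul_comm, mul_smul, hs b hb, smul_zero]
  let μ : R →ₗ[R] R := LinearMap.mulRight R F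
  let A : Ideal R := Submodule.comap μ (I ^ (c + s))
  let i : (R ⧸ A) →ₗ[R] (R ⧸ I ^ (c + s)) := Submodule.mapQ A (I ^ (c + s)) μ le_rfl
  have hi : Function.Injective i := by
    rw [← LinearMap.ker_eq_bot, Submodule.ker_mapQ]
    exact Submodule.mkQ_map_self A
  let g : (R ⧸ A) →ₗ[R] M := Submodule.liftQ A (LinearMap.toSpanSingleton R M (f ^ m • w)) (by
    intro a ha
    simpa using key a (by simpa [A, μ] using ha))
  obtain ⟨h, hh⟩ := Module.Injective.out i hi g
  refine ⟨h (Submodule.Quotient.mk 1), m, ⟨c + s, fun a ha => ?_⟩, ?_⟩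
  · rw [← map_smul, ← Submodule.Quotient.mk_smul, smul_eq_mul, mul_one,
      (Submodule.Quotient.mk_eq_zero _).2 ha, map_zero]
  · have := hh (Submodule.Quotient.mk 1)
    simp only [i, g, μ, Submodule.mapQ_apply, Submodule.liftQ_apply, LinearMap.mulRight_apply,
      LinearMap.toSpanSingleton_apply, one_smul, one_mul] at this
    rw [← this, ← map_smul, ← Submodule.Quotient.mk_smul, smul_eq_mul, mul_one]

/-- Let `E` be a complex of injectives which is exact in positive degrees. In degrees above the number
of elements of `L`, every power-torsion cocycle for the ideal generated by `L` has a power-torsion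
primitive: `H^(i+1)(Γ_I(E)) = 0` for `i ≥ L.length`. The induction on `L` corrects a primitive which
is torsion for the tail of `L` so that it becomes `f`-power torsion too. -/
theorem exists_tors_primitive [IsNoetherianRing R] (E : ℕ → Type) [∀ i, AddCommGroup (E i)]
    [∀ i, Module R (E i)] [∀ i, Module.Injective R (E i)] (d : ∀ i, E i →ₗ[R] E (i + 1))
    (hdd : ∀ i x, d (i + 1) (d i x) = 0)
    (hex : ∀ i x, d (i + 1) x = 0 → ∃ z, d i z = x) (L : List R) :
    ∀ (i : ℕ) (_ : L.length ≤ i) (x : E (i + 1)), d (i + 1) x = 0 →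
      IsPowTors (Ideal.ofList L) x → ∃ z : E i, IsPowTors (Ideal.ofList L) z ∧ d i z = x := by
  induction L with
  | nil =>
    intro i _ x hx _
    obtain ⟨z, hz⟩ := hex i x hx
    exact ⟨z, ⟨1, by simp⟩, hz⟩
  | cons f L ih =>
    intro i hi x hx ht
    rw [Ideal.ofList_cons] at ht ⊢
    obtain ⟨i, rfl⟩ : ∃ j, i = j + 1 := ⟨i - 1, by simp at hi; omega⟩
    simp only [List.length_cons, add_le_add_iff_right] at hi
    -- `z` is a primitive of `x`, torsion for `L` only. As `f ^ k • x = 0`, `f ^ k • z` is a cocycle;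
    -- if `w` is a torsion primitive of it and `v` plays the role of `w / f ^ k`, then `z - d v`
    -- is also `f`-power torsion.
    obtain ⟨z, hz, rfl⟩ := ih (i + 1) (by omega) x hx (ht.anti le_sup_right)
    obtain ⟨k, hk⟩ := ht.exists_pow_smul
    obtain ⟨w, hw, hwz⟩ := ih i hi (f ^ k • z) (by rw [map_smul, hk]) (hz.smul _)
    obtain ⟨v, m, hv, hvw⟩ := exists_divide (Ideal.ofList L) f k hw
    refine ⟨z - d i v, isPowTors_sup (hz.sub (hv.map _)) (m := m + k) ?_, ?_⟩
    · rw [smul_sub, ← map_smul, hvw, map_smul, hwz, ← mul_smul, ← pow_add, sub_self]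
    · rw [map_sub, hdd, sub_zero]
end Torsion

/-! ### Comparing projective and injective resolutions along a system of objects -/

section Zigzag
open CategoryTheory Limits Opposite

universe v u
variable {C : Type u} [Category.{v} C] [Abelian C]

/-- The augmentation `P₀ ⟶ X` of a projective resolution. It is `P.π.f 0`, with target written as `X`
instead of the degree zero term of the single complex. -/
def augP {X : C} (P : ProjectiveResolution X) : P.complex.X 0 ⟶ X := P.π.f 0

/-- The augmentation `X ⟶ E⁰` of an injective resolution. It is `E.ι.f 0`, with source written as `X`
instead of the degree zero term of the single complex. -/
def augE {X : C} (E : InjectiveResolution X) : X ⟶ E.cocomplex.X 0 := E.ι.f 0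

instance {X : C} (P : ProjectiveResolution X) : Epi (augP P) :=
  inferInstanceAs (Epi (P.π.f 0))

instance {X : C} (E : InjectiveResolution X) : Mono (augE E) :=
  inferInstanceAs (Mono (E.ι.f 0))

lemma d_augP {X : C} (P : ProjectiveResolution X) : P.complex.d 1 0 ≫ augP P = 0 :=
  P.complex_d_comp_π_f_zero

lemma augE_d {X : C} (E : InjectiveResolution X) : augE E ≫ E.cocomplex.d 0 1 = 0 :=
  E.ι_f_zero_comp_complex_d

lemma exact_augP {X : C} (P : ProjectiveResolution X) :
    (ShortComplex.mk _ _ (d_augP P)).Exact := P.exact₀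

lemma exact_augE {X : C} (E : InjectiveResolution X) :
    (ShortComplex.mk _ _ (augE_d E)).Exact := E.exact₀

lemma lift_augP {X Y : C} (f : X ⟶ Y) (P : ProjectiveResolution X) (Q : ProjectiveResolution Y) :
    (ProjectiveResolution.lift f P Q).f 0 ≫ augP Q = augP P ≫ f :=
  ProjectiveResolution.lift_commutes_zero f P Q

variable {D : Type} [SmallCategory D] (N : D ⥤ C) (P : ∀ k, ProjectiveResolution (N.obj k))
variable {M : C} (E : InjectiveResolution M)

/-- A chain map `P l ⟶ P k` lifting the transition map `N l ⟶ N k` of the system `N`. -/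
noncomputable abbrev transMap {k l : D} (w : l ⟶ k) : (P l).complex ⟶ (P k).complex :=
  ProjectiveResolution.lift (N.map w) (P l) (P k)

/-- Cocycles of bidegree `(j + 1, i)` in the double complex `Hom(P k, E)`, closed for both
differentials, become coboundaries of elements of bidegree `(j, i)`, closed for the differential of
`E`, after pulling back along some `l ⟶ k`. -/
def Dies (j i : ℕ) : Prop :=
  ∀ (k : D) (g : (P k).complex.X (j + 1) ⟶ E.cocomplex.X i),
    (P k).complex.d (j + 2) (j + 1) ≫ g = 0 → g ≫ E.cocomplex.d i (i + 1) = 0 →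
    ∃ (l : D) (w : l ⟶ k) (u : (P l).complex.X j ⟶ E.cocomplex.X i),
      u ≫ E.cocomplex.d i (i + 1) = 0 ∧
        (transMap N P w).f (j + 1) ≫ g = (P l).complex.d (j + 1) j ≫ u

/-- Diagonal chase: `g` of bidegree `(j + 2, i)` is `d g'` with `g'` of bidegree `(j + 1, i)`, since
`E i` is injective. The hypothesis makes `g' ≫ d` a coboundary after pulling back, of some `u` that
is in turn of the form `u' ≫ d` since `P l` is projective. -/
lemma Dies.step {j i : ℕ} (h : Dies N P E j (i + 1)) : Dies N P E (j + 1) i := by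
  intro k g hg hg'
  let g' := ((P k).exact_succ (j + 1)).descToInjective g hg
  have hgg' : (P k).complex.d (j + 2) (j + 1) ≫ g' = g :=
    ((P k).exact_succ (j + 1)).comp_descToInjective g hg
  obtain ⟨l, w, u, hu, hgu⟩ := h k (g' ≫ E.cocomplex.d i (i + 1))
    (by rw [reassoc_of% hgg', hg']) (by simp)
  let u' := (E.exact_succ i).liftFromProjective u hu
  have huu' : u' ≫ E.cocomplex.d i (i + 1) = u := (E.exact_succ i).liftFromProjective_comp u hu
  refine ⟨l, w, (transMap N P w).f (j + 1) ≫ g' - (P l).complex.d (j + 1) j ≫ u', ?_, ?_⟩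
  · rw [Preadditive.sub_comp, Category.assoc, Category.assoc, huu', hgu, sub_self]
  · rw [Preadditive.comp_sub, HomologicalComplex.d_comp_d_assoc, zero_comp, sub_zero,
      ← HomologicalComplex.Hom.comm_assoc, hgg']

/-- In projective degree `1`, dying can be checked on `Hom(N k, E)`: it is enough that every cocycle of
`Hom(N k, E)` in degree `i + 1` becomes a coboundary along some `l ⟶ k`. -/
lemma Dies.base {i : ℕ}
    (h : ∀ (k : D) (x : N.obj k ⟶ E.cocomplex.X (i + 1)),
      x ≫ E.cocomplex.d (i + 1) (i + 2) = 0 → ∃ (l : D) (w : l ⟶ k)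
        (z : N.obj l ⟶ E.cocomplex.X i), z ≫ E.cocomplex.d i (i + 1) = N.map w ≫ x) :
    Dies N P E 0 i := by
  intro k g hg hg'
  let g' := ((P k).exact_succ 0).descToInjective g hg
  have hgg' : (P k).complex.d 1 0 ≫ g' = g := ((P k).exact_succ 0).comp_descToInjective g hg
  have hx : (P k).complex.d 1 0 ≫ g' ≫ E.cocomplex.d i (i + 1) = 0 := by
    rw [reassoc_of% hgg', hg']
  have : Epi (ShortComplex.mk _ _ (d_augP (P k))).g := inferInstanceAs (Epi (augP (P k)))
  let x : N.obj k ⟶ E.cocomplex.X (i + 1) := (exact_augP (P k)).desc _ hx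
  have hx' : augP (P k) ≫ x = g' ≫ E.cocomplex.d i (i + 1) := (exact_augP (P k)).g_desc _ hx
  have hxd : x ≫ E.cocomplex.d (i + 1) (i + 2) = 0 := by
    rw [← cancel_epi (augP (P k)), reassoc_of% hx']
    simp
  obtain ⟨l, w, z, hz⟩ := h k x hxd
  refine ⟨l, w, (transMap N P w).f 0 ≫ g' - augP (P l) ≫ z, ?_, ?_⟩
  · rw [Preadditive.sub_comp, Category.assoc, Category.assoc, hz, ← hx',
      reassoc_of% lift_augP (N.map w) (P l) (P k), sub_self]
  · rw [Preadditive.comp_sub, reassoc_of% d_augP (P l), zero_comp,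
      sub_zero, ← HomologicalComplex.Hom.comm_assoc, hgg']

/-- Shifting along the antidiagonal, from bidegree `(1, n)` to `(j + 1, n - j)`. -/
lemma dies_of_base {n : ℕ} (h : Dies N P E 0 n) : ∀ j ≤ n, Dies N P E j (n - j) := by
  intro j
  induction j with
  | zero => intro _; exact h
  | succ j ih =>
    intro hj
    apply Dies.step
    convert ih (by omega) using 1
    omega

/-- In injective degree `0`, dying gives a statement about cocycles of `Hom(P k, M)`, which computes
`Ext(N k, M)`. -/
lemma Dies.target {j : ℕ} (h : Dies N P E j 0) (k : D) (f : (P k).complex.X (j + 1) ⟶ M)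
    (hf : (P k).complex.d (j + 2) (j + 1) ≫ f = 0) :
    ∃ (l : D) (w : l ⟶ k) (u : (P l).complex.X j ⟶ M),
        (transMap N P w).f (j + 1) ≫ f = (P l).complex.d (j + 1) j ≫ u := by
  obtain ⟨l, w, u, hu, hfu⟩ := h k (f ≫ augE E) (by rw [reassoc_of% hf, zero_comp])
    (by rw [Category.assoc, augE_d, comp_zero])
  have : Mono (ShortComplex.mk _ _ (augE_d E)).f := inferInstanceAs (Mono (augE E))
  let v : (P l).complex.X j ⟶ M := (exact_augE E).lift u hu
  have hv : v ≫ augE E = u := (exact_augE E).lift_f u hu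
  refine ⟨l, w, v, ?_⟩
  rw [← cancel_mono (augE E)]
  rw [Category.assoc, Category.assoc, hv, hfu]
end Zigzag

/-! ### Cocycle representatives of Ext classes -/

section ExtMap
open CategoryTheory Limits Opposite

universe u
variable {R : Type u} [CommRing R] {Y M : ModuleCat.{u} R}
  (Q : ProjectiveResolution Y)

/-- Every class in `Ext^(n+1)(Y, M)` is represented by a cocycle `f : Q_(n+1) ⟶ M`, and its pullback
along `w : X ⟶ Y` vanishes as soon as the pullback of `f` is a coboundary. Mathlib's `Ext` in the
first variable is a left derived functor with values in the opposite category, so cocycles appear as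
opcycles there. -/
lemma exists_cocycle (n : ℕ) (e : ((Ext R (ModuleCat.{u} R) (n + 1)).obj (op Y)).obj M) :
    ∃ f : Q.complex.X (n + 1) ⟶ M, Q.complex.d (n + 2) (n + 1) ≫ f = 0 ∧
      ∀ {X : ModuleCat.{u} R} (P : ProjectiveResolution X) (w : X ⟶ Y)
        (u : P.complex.X n ⟶ M),
        (ProjectiveResolution.lift w P Q).f (n + 1) ≫ f = P.complex.d (n + 1) n ≫ u →
        (((Ext R (ModuleCat.{u} R) (n + 1)).map w.op).app M).hom e = 0 := by
  let F := ((linearYoneda R (ModuleCat.{u} R)).obj M).rightOp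
  let K := (F.mapHomologicalComplex (ComplexShape.down ℕ)).obj Q.complex
  let α := (Q.isoLeftDerivedObj F (n + 1))
  let e' : (K.homology (n + 1)).unop := α.inv.unop.hom e
  have hsurj : Function.Surjective (K.homologyι (n + 1)).unop.hom := by
    rw [← ModuleCat.epi_iff_surjective]
    infer_instance
  obtain ⟨z, hz⟩ := hsurj e'
  let f : Q.complex.X (n + 1) ⟶ M := (K.pOpcycles (n + 1)).unop.hom z
  refine ⟨f, ?_, ?_⟩
  · have : (K.pOpcycles (n + 1)).unop ≫ (K.d (n + 2) (n + 1)).unop = 0 := by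
      rw [← unop_comp, K.d_pOpcycles, unop_zero]
    exact congr($(this).hom z)
  · intro X P w u hu
    let φ := ProjectiveResolution.lift w P Q
    let L := (F.mapHomologicalComplex (ComplexShape.down ℕ)).obj P.complex
    let Φ : L ⟶ K := (F.mapHomologicalComplex (ComplexShape.down ℕ)).map φ
    have nat := ProjectiveResolution.isoLeftDerivedObj_inv_naturality w P Q φ
      (ProjectiveResolution.lift_commutes_zero _ _ _) F (n + 1)
    have hz' : (HomologicalComplex.opcyclesMap Φ (n + 1)).unop.hom z =
        (L.fromOpcycles (n + 1) n).unop.hom u := by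
      have hinj : Function.Injective (L.pOpcycles (n + 1)).unop.hom := by
        rw [← ModuleCat.mono_iff_injective]
        infer_instance
      apply hinj
      have h1 : (HomologicalComplex.opcyclesMap Φ (n + 1)).unop ≫ (L.pOpcycles (n + 1)).unop
          = (K.pOpcycles (n + 1)).unop ≫ (Φ.f (n + 1)).unop := by
        rw [← unop_comp, HomologicalComplex.p_opcyclesMap, unop_comp]
      have h2 : (L.fromOpcycles (n + 1) n).unop ≫ (L.pOpcycles (n + 1)).unop
          = (L.d (n + 1) n).unop := by
        rw [← unop_comp, HomologicalComplex.p_fromOpcycles]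
      exact (congr($(h1).hom z)).trans (Eq.trans hu (congr($(h2).hom u)).symm)
    have h3 : (HomologicalComplex.homologyMap Φ (n + 1)).unop.hom e' = 0 := by
      have h4 : (K.homologyι (n + 1)).unop ≫ (HomologicalComplex.homologyMap Φ (n + 1)).unop =
          (HomologicalComplex.opcyclesMap Φ (n + 1)).unop ≫ (L.homologyι (n + 1)).unop := by
        rw [← unop_comp, HomologicalComplex.homologyι_naturality, unop_comp]
      have h5 : (L.fromOpcycles (n + 1) n).unop ≫ (L.homologyι (n + 1)).unop = 0 := by
        rw [← unop_comp, HomologicalComplex.homologyι_comp_fromOpcycles, unop_zero]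
      rw [← hz]
      refine (congr($(h4).hom z)).trans ?_
      refine Eq.trans ?_ (congr($(h5).hom u))
      exact congrArg (L.homologyι (n + 1)).unop.hom hz'
    have hinj : Function.Injective (P.isoLeftDerivedObj F (n + 1)).inv.unop.hom := by
      rw [← ModuleCat.mono_iff_injective]
      infer_instance
    apply hinj
    have nat' := congrArg Quiver.Hom.unop nat
    refine (congr($(nat').hom e)).trans ?_
    exact h3.trans (map_zero (P.isoLeftDerivedObj F (n + 1)).inv.unop.hom).symm

end ExtMap

/-! ### Local cohomology vanishes above the number of generators -/

section Main
open CategoryTheory Limits Opposite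

variable {R : Type} [CommRing R] [IsNoetherianRing R]

open localCohomology in
/-- `H^(n+1)_I(M) = 0` if `I` is generated by at most `n` elements of a Noetherian ring. -/
theorem subsingleton_localCohomology_ofList (L : List R) (n : ℕ) (hL : L.length ≤ n)
    (M : ModuleCat.{0} R) :
    Subsingleton ((localCohomology (Ideal.ofList L) (n + 1)).obj M) := by
  set I := Ideal.ofList L with hI
  let E := injectiveResolution M
  let N : ℕᵒᵖ ⥤ ModuleCat.{0} R := ringModIdeals (idealPowersDiagram I)
  let P : ∀ k, ProjectiveResolution (N.obj k) := fun k => projectiveResolution (N.obj k)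
  have inj : ∀ i, Module.Injective R (E.cocomplex.X i) := fun i =>
    Module.injective_module_of_injective_object R (E.cocomplex.X i)
      (inj := inferInstanceAs (Injective (E.cocomplex.X i)))
  have prim := exists_tors_primitive (fun i => E.cocomplex.X i)
    (fun i => (E.cocomplex.d i (i + 1)).hom)
    (fun i x => congr($(E.cocomplex.d_comp_d i (i + 1) (i + 2)).hom x))
    (fun i x hx => (ShortComplex.moduleCat_exact_iff _).1 (E.exact_succ i) x hx) L n hL
  -- A map `R / I ^ k ⟶ E (n + 1)` is a power-torsion element, and a power-torsion primitive of it is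
  -- a map `R / I ^ l ⟶ E n` for some `l ≥ k`.
  have base : Dies N P E 0 n := by
    apply Dies.base
    intro k x hx
    let ξ : (R ⧸ I ^ k.unop) →ₗ[R] E.cocomplex.X (n + 1) := x.hom
    obtain ⟨z, ⟨s, hs⟩, hz⟩ := prim (ξ (Submodule.Quotient.mk 1))
      congr($(hx).hom (Submodule.Quotient.mk 1))
      ⟨k.unop, fun a ha => by
        rw [← map_smul, ← Submodule.Quotient.mk_smul, smul_eq_mul, mul_one,
          (Submodule.Quotient.mk_eq_zero _).2 ha, map_zero]⟩
    let w : op (max s k.unop) ⟶ k := (homOfLE (le_max_right s k.unop)).op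
    let ζ : (R ⧸ I ^ max s k.unop) →ₗ[R] E.cocomplex.X n :=
      Submodule.liftQ (I ^ max s k.unop) (LinearMap.toSpanSingleton R _ z) (fun a ha => by
        rw [LinearMap.mem_ker, LinearMap.toSpanSingleton_apply]
        exact hs a (Ideal.pow_le_pow_right (le_max_left _ _) ha))
    refine ⟨op (max s k.unop), w, ModuleCat.ofHom ζ, ?_⟩
    refine ModuleCat.hom_ext (Submodule.linearMap_qext _ (LinearMap.ext_ring ?_))
    refine Eq.trans ?_ hz
    change (E.cocomplex.d n (n + 1)).hom ((1 : R) • z) = _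
    rw [one_smul]
  have dies : Dies N P E n 0 := by simpa using dies_of_base N P E base n le_rfl
  let F := diagram (idealPowersDiagram I) (n + 1)
  let c := isColimitOfPreserves ((evaluation _ _).obj M) (colimit.isColimit F)
  refine subsingleton_of_forall_eq 0 fun e => ?_
  obtain ⟨k, e, rfl⟩ := Concrete.isColimit_exists_rep _ c e
  obtain ⟨f, hf, hf'⟩ := exists_cocycle (P k.unop) n e
  obtain ⟨l, w, u, hu⟩ := dies.target N P E k.unop f hf
  have h0 := hf' (P l) (N.map w) u hu
  let w' : k ⟶ op l := w.op
  let G := F ⋙ (evaluation _ _).obj M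
  have h1 : (G.map w').hom e = 0 := h0
  have h2 := congr($((((evaluation _ _).obj M).mapCocone (colimit.cocone F)).w w').hom e)
  refine h2.symm.trans ?_
  exact Eq.trans (congrArg ((((evaluation _ _).obj M).mapCocone (colimit.cocone F)).ι.app
    (op l)).hom h1) (map_zero _)
end Main

/-! ### Six generators of J up to radical -/

section Triangulation

/-- The ten minimal non-faces of the six-vertex triangulation of the projective plane. -/
def nonfaces : Finset (Finset (Fin 6)) :=
  {{0, 1, 2}, {0, 1, 3}, {0, 2, 4}, {0, 3, 5}, {0, 4, 5}, {1, 2, 5}, {1, 3, 4}, {1, 4, 5},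
    {2, 3, 4}, {2, 3, 5}}

/-- The triangulation has dimension two, so four vertices never span a face. -/
lemma exists_nonface_subset :
    ∀ s : Finset (Fin 6), 4 ≤ s.card → ∃ t ∈ nonfaces, t ⊆ s := by decide

lemma card_nonface : ∀ s ∈ nonfaces, s.card = 3 := by decide

/-- If all but `k` of the `a i` are zero, a sum of products over `k`-element sets has at most one
nonzero term. -/
lemma prod_eq_zero_of_sum_eq_zero {A : Type} [CommRing A] {a : Fin 6 → A} {k : ℕ}
    {T : Finset (Finset (Fin 6))} (hT : ∀ s ∈ T, s.card = k) {Z : Finset (Fin 6)}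
    (hZ : ∀ i ∈ Z, a i = 0) (hk : Z.card + k = 6) (h : ∑ s ∈ T, ∏ i ∈ s, a i = 0) :
    ∀ s ∈ T, ∏ i ∈ s, a i = 0 := by
  have hne : ∀ s ∈ T, s ≠ Zᶜ → ∏ i ∈ s, a i = 0 := by
    intro s hs hsZ
    by_contra h0
    refine hsZ (Finset.eq_of_subset_of_card_le (fun i hi => ?_) ?_)
    · exact Finset.mem_compl.2 fun hiZ => h0 (Finset.prod_eq_zero hi (hZ i hiZ))
    · rw [Finset.card_compl, hT s hs, Fintype.card_fin]
      omega
  intro s hs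
  by_cases hsZ : s = Zᶜ
  · rw [Finset.sum_eq_single_of_mem s hs (fun t ht hts => hne t ht (hsZ ▸ hts))] at h
    exact h
  · exact hne s hs hsZ

/-- The elementary symmetric polynomial of degree `k` in the six values `a i`. -/
def elemSymm {A : Type} [CommRing A] (a : Fin 6 → A) (k : ℕ) : A :=
  ∑ s ∈ Finset.univ.powersetCard k, ∏ i ∈ s, a i

/-- When `6 - k` of the `a i` vanish, `elemSymm a k` is the product of the remaining ones. -/
lemma exists_new_zero {A : Type} [CommRing A] [IsDomain A] {a : Fin 6 → A} {k : ℕ}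
    {Z : Finset (Fin 6)} (hZ : ∀ i ∈ Z, a i = 0) (hk : Z.card + k = 6)
    (h : elemSymm a k = 0) :
    ∃ Z' : Finset (Fin 6), Z'.card = Z.card + 1 ∧ ∀ i ∈ Z', a i = 0 := by
  have := prod_eq_zero_of_sum_eq_zero (fun s hs => (Finset.mem_powersetCard.1 hs).2) hZ hk h Zᶜ
    (Finset.mem_powersetCard.2 ⟨Finset.subset_univ _, by
      rw [Finset.card_compl, Fintype.card_fin]; omega⟩)
  obtain ⟨i, hi, h0⟩ := Finset.prod_eq_zero_iff.1 this
  refine ⟨insert i Z, Finset.card_insert_of_notMem (Finset.mem_compl.1 hi), fun j hj => ?_⟩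
  rcases Finset.mem_insert.1 hj with rfl | hj
  exacts [h0, hZ j hj]

lemma nonface_prod_eq_zero {A : Type} [CommRing A] [IsDomain A] {a : Fin 6 → A}
    (h6 : elemSymm a 6 = 0) (h5 : elemSymm a 5 = 0) (h4 : elemSymm a 4 = 0)
    (h3 : ∑ s ∈ nonfaces, ∏ i ∈ s, a i = 0) : ∀ s ∈ nonfaces, ∏ i ∈ s, a i = 0 := by
  obtain ⟨Z₁, c₁, h₁⟩ := exists_new_zero (a := a) (Z := ∅) (by simp) (by simp) h6
  obtain ⟨Z₂, c₂, h₂⟩ := exists_new_zero h₁ (by rw [c₁]; simp) h5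
  obtain ⟨Z₃, c₃, h₃⟩ := exists_new_zero h₂ (by rw [c₂, c₁]; simp) h4
  exact prod_eq_zero_of_sum_eq_zero card_nonface h₃ (by rw [c₃, c₂, c₁]; simp) h3

/-- Six elements generating `J` up to radical: `y₁`, `y₂`, the elementary symmetric polynomials of
degrees `6`, `5`, `4` in the `xᵢ`, and the sum of the ten generators of `I`. -/
def Jgens : List S :=
  [y 0, y 1, elemSymm x 6, elemSymm x 5, elemSymm x 4, ∑ s ∈ nonfaces, ∏ i ∈ s, x i]

lemma Igens_eq : Igens = (fun s : Finset (Fin 6) => ∏ i ∈ s, x i) '' (nonfaces : Set _) := by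
  simp [Igens, nonfaces, Set.image_insert_eq, mul_assoc]

lemma nonface_prod_mem {s : Finset (Fin 6)} (hs : s ∈ nonfaces) : ∏ i ∈ s, x i ∈ J := by
  refine Ideal.mem_sup_left (Ideal.subset_span ?_)
  rw [Igens_eq]
  exact ⟨s, hs, rfl⟩

lemma elemSymm_mem {k : ℕ} (hk : 4 ≤ k) : elemSymm x k ∈ J := by
  refine Ideal.sum_mem _ fun s hs => ?_
  obtain ⟨t, ht, hts⟩ := exists_nonface_subset s (by rwa [(Finset.mem_powersetCard.1 hs).2])
  exact Ideal.mem_of_dvd _ (Finset.prod_dvd_prod_of_subset t s x hts) (nonface_prod_mem ht)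

lemma radical_J : J.radical = (Ideal.ofList Jgens).radical := by
  apply le_antisymm
  · rw [Ideal.radical_le_radical_iff, Ideal.radical_eq_sInf]
    refine le_sInf fun Q hQ => ?_
    obtain ⟨hQ, hprime⟩ := hQ
    have hmem : ∀ r ∈ Jgens, r ∈ Q := fun r hr => hQ (Ideal.subset_span hr)
    simp only [Jgens, List.forall_mem_cons] at hmem
    obtain ⟨hy0, hy1, h6, h5, h4, h3, -⟩ := hmem
    have key := nonface_prod_eq_zero (a := fun i => Ideal.Quotient.mk Q (x i))
      (by simpa [elemSymm] using Ideal.Quotient.eq_zero_iff_mem.2 h6)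
      (by simpa [elemSymm] using Ideal.Quotient.eq_zero_iff_mem.2 h5)
      (by simpa [elemSymm] using Ideal.Quotient.eq_zero_iff_mem.2 h4)
      (by simpa using Ideal.Quotient.eq_zero_iff_mem.2 h3)
    refine sup_le (Ideal.span_le.2 ?_) (Ideal.span_le.2 ?_)
    · rw [Igens_eq]
      rintro _ ⟨s, hs, rfl⟩
      refine Ideal.Quotient.eq_zero_iff_mem.1 ?_
      rw [map_prod]
      exact key s hs
    · rintro _ (rfl | rfl)
      exacts [hy0, hy1]
  · refine Ideal.radical_mono (Ideal.span_le.2 ?_)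
    change ∀ r ∈ Jgens, r ∈ J
    simp only [Jgens, List.forall_mem_cons]
    exact ⟨Ideal.mem_sup_right (Ideal.subset_span (Or.inl rfl)),
      Ideal.mem_sup_right (Ideal.subset_span (Or.inr rfl)),
      elemSymm_mem (by norm_num), elemSymm_mem (by norm_num),
      elemSymm_mem (by norm_num), Ideal.sum_mem _ fun s hs => nonface_prod_mem hs, by simp⟩

end Triangulation

theorem H7_eq_zero :
    Subsingleton ((localCohomology J 7).obj (ModuleCat.of S S)) := by
  have := subsingleton_localCohomology_ofList Jgens 6 (by simp [Jgens]) (ModuleCat.of S S)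
  exact ((localCohomology.isoOfSameRadical radical_J 7).app
    (ModuleCat.of S S)).toLinearEquiv.injective.subsingleton
end
end

section
/- Let I ⊆ ℤ₂[[x₁,…,x₆]] be the square-free monomial ideal I = (x₁x₂x₃, x₁x₂x₄, x₁x₃x₅, x₁x₄x₆, x₁x₅x₆, x₂x₃x₆, x₂x₄x₅, x₂x₅x₆, x₃x₄x₅, x₃x₄x₆), let S = ℤ₂[[x₁,…,x₆, y₁,…,y₆]], and let J = IS + (y₁, y₂)S. Then the local cohomology module H⁶_J(S) is annihilated by 2, i.e. 2·u = 0 for every u ∈ H⁶_J(S). -/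
/-!
Local cohomology is the colimit `H⁶_J(S) = colim Ext⁶(S/Jᵏ, S)`.  The ideals `J⁽ᵗ⁾` generated by the
`t`-th powers of the twelve monomial generators of `J` are cofinal with the powers `Jᵏ`, so it is
enough that `2` kills `Ext⁶(S/J⁽ᵗ⁾, S)` for every `t` (`smul_localCohomology_eq_zero`).

Each `S/J⁽ᵗ⁾` has an explicit free resolution of length `6`, a cellular resolution.  Take the cell
structure on `ℝP²` dual to the six-vertex triangulation: its 10 vertices, 15 edges and 6 pentagons
are labelled by the squarefree monomials of degree 3, 4, 5 which are the least common multiples of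
the generators of `I` at their vertices.  Over a ring in which `2` is not invertible this complex is
not acyclic, and it is completed by a disk `e`, labelled `x₁⋯x₆`, glued along a loop generating
`π₁(ℝP²)`, and a 3-cell `f`, labelled `x₁⋯x₆`, with boundary `2e` minus the sum of the pentagons.
For every set `σ` of variables the cells with label supported on `σ` form an augmented
complex over `ℤ` with no homology outside the degree of the empty cell, as an explicit contracting homotopy
shows (`hCol_homotopy`); this is exactness of the resolution in each multidegree
(`MonComplex.D_exact`).  Adding the generators `y₁`, `y₂` is
taking two mapping cones (`MonComplex.cone`, `MonComplex.Exact.cone`).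

The resulting resolution has a single basis element in degree 6, coming from `f`, and the last
differential has entry `2` at the basis element of degree 5 that comes from `e`, since the two labels
agree.  Hence `2` times any functional on the last module factors through that differential, and
`2 · Ext⁶(S/J⁽ᵗ⁾, S) = 0` (`MonComplex.smul_ext`).
-/

/-!
STATEMENT 5: Let `I ⊆ ℤ₂[[x₁,…,x₆]]` be the monomial ideal of the standard triangulation of
ℝP², let `S = ℤ₂[[x₁,…,x₆,y₁,…,y₆]]` and `J = IS + (y₁,y₂)S`.  Then `H⁶_J(S)` is annihilated by 2.
Variables are 0-indexed: `xᵢ₊₁ = X i`, `yⱼ₊₁ = X (6+j)`.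
-/

noncomputable section

namespace RP2

open CategoryTheory Limits

/-! ### Annihilating Ext and local cohomology -/

section A
universe u
variable {R : Type u} [CommRing R] (F : ℕ → Type u) [∀ n, AddCommGroup (F n)] [∀ n, Module R (F n)]
  [∀ n, Module.Projective R (F n)]
  (d : ∀ n, F (n + 1) →ₗ[R] F n) (hd : ∀ n, d n ∘ₗ d (n + 1) = 0)

/-- The chain complex of `R`-modules with terms `F n` and differentials `d n : F (n + 1) → F n`. -/
def cplx : ChainComplex (ModuleCat.{u} R) ℕ :=
  ChainComplex.of (fun n => ModuleCat.of R (F n)) (fun n => ModuleCat.ofHom (d n))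
    (fun n => by rw [← ModuleCat.ofHom_comp, hd]; rfl)

lemma cplx_d (n : ℕ) : (cplx F d hd).d (n + 1) n = ModuleCat.ofHom (d n) :=
  ChainComplex.of_d (fun n => ModuleCat.of R (F n)) (fun n => ModuleCat.ofHom (d n)) n

lemma cplx_exactAt (hex : ∀ n, LinearMap.ker (d n) ≤ LinearMap.range (d (n + 1)))
    (n : ℕ) : (cplx F d hd).ExactAt (n + 1) := by
  rw [HomologicalComplex.exactAt_iff' _ (n + 1 + 1) (n + 1) n (by simp) (by simp)]
  rw [ShortComplex.moduleCat_exact_iff_ker_sub_range]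
  have h1 : ((cplx F d hd).sc' (n + 1 + 1) (n + 1) n).g.hom = d n := by
    change ((cplx F d hd).d (n + 1) n).hom = _
    rw [cplx_d]; rfl
  have h2 : ((cplx F d hd).sc' (n + 1 + 1) (n + 1) n).f.hom = d (n + 1) := by
    change ((cplx F d hd).d (n + 1 + 1) (n + 1)).hom = _
    rw [cplx_d]; rfl
  rw [h1, h2]
  exact hex n

/-- The augmentation `π : F 0 → M` as a map of complexes to `M` in degree `0`. -/
def augMap {M : Type u} [AddCommGroup M] [Module R M] (π : F 0 →ₗ[R] M)
    (hk : LinearMap.ker π = LinearMap.range (d 0)) :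
    cplx F d hd ⟶ (ChainComplex.single₀ (ModuleCat.{u} R)).obj (ModuleCat.of R M) :=
  (ChainComplex.toSingle₀Equiv _ _).symm ⟨(ModuleCat.ofHom π : ModuleCat.of R (F 0) ⟶ _), by
    rw [cplx_d]
    change ModuleCat.ofHom (π ∘ₗ d 0) = 0
    have : π ∘ₗ d 0 = 0 := LinearMap.range_le_ker_iff.1 hk.ge
    rw [this]; rfl⟩

lemma augMap_f_zero {M : Type u} [AddCommGroup M] [Module R M] (π : F 0 →ₗ[R] M)
    (hk : LinearMap.ker π = LinearMap.range (d 0)) :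
    (augMap F d hd π hk).f 0 = (ModuleCat.ofHom π : ModuleCat.of R (F 0) ⟶ ModuleCat.of R M) :=
  ChainComplex.toSingle₀Equiv_symm_apply_f_zero _ _

/-- An exact sequence `⋯ → F 1 → F 0 → M → 0` of modules with every `F n` projective, as a
projective resolution of `M`. -/
def resol (hex : ∀ n, LinearMap.ker (d n) ≤ LinearMap.range (d (n + 1)))
    {M : Type u} [AddCommGroup M] [Module R M] (π : F 0 →ₗ[R] M)
    (hπ : Function.Surjective π) (hk : LinearMap.ker π = LinearMap.range (d 0)) :
    ProjectiveResolution (ModuleCat.of R M) where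
  complex := cplx F d hd
  projective n := by
    change Projective (ModuleCat.of R (F n))
    infer_instance
  π := augMap F d hd π hk
  quasiIso := ⟨fun n => by
    cases n
    · rw [ChainComplex.quasiIsoAt₀_iff, ShortComplex.quasiIso_iff_of_zeros']
      · refine ⟨?_, ?_⟩
        · rw [ShortComplex.moduleCat_exact_iff_ker_sub_range]
          change LinearMap.ker ((augMap F d hd π hk).f 0).hom ≤
            LinearMap.range ((cplx F d hd).d 1 0).hom
          rw [augMap_f_zero, cplx_d]
          exact hk.le
        · change Epi ((augMap F d hd π hk).f 0)
          rw [augMap_f_zero]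
          exact (ModuleCat.epi_iff_surjective _).2 hπ
      all_goals rfl
    · rw [quasiIsoAt_iff_exactAt']
      · exact cplx_exactAt F d hd hex _
      · apply ChainComplex.exactAt_succ_single_obj⟩

/-- If `r` times every functional on `F (n + 1)` factors through `d n`, then `r` kills the cokernel of
`Hom(F n, N) → Hom(F (n + 1), N)`, and so it kills `Extⁿ⁺¹(M, N)`. -/
lemma smul_ext_eq_zero (hd : ∀ n, d n ∘ₗ d (n + 1) = 0)
    (hex : ∀ n, LinearMap.ker (d n) ≤ LinearMap.range (d (n + 1)))
    {M : Type u} [AddCommGroup M] [Module R M] (π : F 0 →ₗ[R] M)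
    (hπ : Function.Surjective π) (hk : LinearMap.ker π = LinearMap.range (d 0))
    (N : Type u) [AddCommGroup N] [Module R N] (n : ℕ) (r : R)
    (hr : ∀ f : F (n + 1) →ₗ[R] N, ∃ g : F n →ₗ[R] N, r • f = g ∘ₗ d n)
    (u : ((Ext R (ModuleCat.{u} R) (n + 1)).obj (Opposite.op (ModuleCat.of R M))).obj
      (ModuleCat.of R N)) : r • u = 0 := by
  let P := resol F d hd hex π hπ hk
  let e := P.isoExt (R := R) (n + 1) (ModuleCat.of R N)
  let K := P.complex.linearYonedaObj R (ModuleCat.of R N)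
  suffices h : ∀ v : K.homology (n + 1), r • v = 0 by
    have h2 : e.hom.hom (r • u) = 0 := by rw [map_smul]; exact h _
    have h3 := congrArg e.inv.hom h2
    have h4 : e.inv.hom (e.hom.hom (r • u)) = r • u := by
      have := congrArg (fun φ => φ.hom (r • u)) e.hom_inv_id
      exact this
    rw [← h4, h3, map_zero]
  intro v
  obtain ⟨z, rfl⟩ := (ModuleCat.epi_iff_surjective (K.homologyπ (n + 1))).1 inferInstance v
  let f : ModuleCat.of R (F (n + 1)) ⟶ ModuleCat.of R N := (K.iCycles (n + 1)).hom z
  obtain ⟨g, hg⟩ := hr f.hom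
  have key : r • z = (K.toCycles n (n + 1)).hom (ModuleCat.ofHom g : ModuleCat.of R (F n) ⟶ _) := by
    apply (ModuleCat.mono_iff_injective (K.iCycles (n + 1))).1 inferInstance
    have h1 : (K.iCycles (n + 1)).hom ((K.toCycles n (n + 1)).hom
        (ModuleCat.ofHom g : ModuleCat.of R (F n) ⟶ _)) =
        (K.d n (n + 1)).hom (ModuleCat.ofHom g : ModuleCat.of R (F n) ⟶ _) := by
      rw [← K.toCycles_i n (n + 1)]; rfl
    refine Eq.trans ?_ h1.symm
    rw [map_smul]
    change r • f = (cplx F d hd).d (n + 1) n ≫ ModuleCat.ofHom g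
    rw [cplx_d]
    apply ModuleCat.hom_ext
    exact hg
  have h4 : r • (K.homologyπ (n + 1)).hom z = 0 := by
    rw [← map_smul, key]
    have := congrArg (fun φ => φ.hom (ModuleCat.ofHom g : ModuleCat.of R (F n) ⟶ _))
      (K.toCycles_comp_homologyπ n (n + 1))
    exact this
  exact h4
end A

section B
universe u
variable {R : Type u} [CommRing R]

/-- If between each power `J ^ k` and some smaller power `J ^ m` there is an ideal `I` for which `r`
kills `Extⁱ(R ⧸ I, N)`, then `r` kills `Hⁱ_J(N)`: the transition map `Extⁱ(R ⧸ J ^ k, N) →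
Extⁱ(R ⧸ J ^ m, N)` factors through `Extⁱ(R ⧸ I, N)`. -/
lemma smul_localCohomology_eq_zero (J : Ideal R) (i : ℕ) (N : ModuleCat.{u} R) (r : R)
    (h : ∀ k : ℕ, ∃ (I : Ideal R) (m : ℕ), I ≤ J ^ k ∧ J ^ m ≤ I ∧ k ≤ m ∧
      ∀ u : ((Ext R (ModuleCat.{u} R) i).obj (Opposite.op (ModuleCat.of R (R ⧸ I)))).obj N,
        r • u = 0)
    (u : (localCohomology J i).obj N) : r • u = 0 := by
  have := localCohomology.hasColimitDiagram.{u, 0} (localCohomology.idealPowersDiagram J) i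
  let D := localCohomology.diagram (localCohomology.idealPowersDiagram J) i
  let ev := (evaluation (ModuleCat.{u} R) (ModuleCat.{u} R)).obj N
  have hc : IsColimit (ev.mapCocone (colimit.cocone D)) :=
    isColimitOfPreserves ev (colimit.isColimit D)
  have key : (r • 𝟙 ((colimit D).obj N) : (colimit D).obj N ⟶ (colimit D).obj N) = 0 := by
    apply hc.hom_ext
    intro j
    obtain ⟨I, m, hIk, hmI, hkm, hI⟩ := h j.unop.unop
    let f : j ⟶ Opposite.op (Opposite.op m) := (homOfLE hkm).op.op
    let a : ModuleCat.of R (R ⧸ J ^ m) ⟶ ModuleCat.of R (R ⧸ I) :=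
      ModuleCat.ofHom (Submodule.mapQ _ _ LinearMap.id hmI)
    let b : ModuleCat.of R (R ⧸ I) ⟶ ModuleCat.of R (R ⧸ J ^ j.unop.unop) :=
      ModuleCat.ofHom (Submodule.mapQ _ _ LinearMap.id hIk)
    have hab : (localCohomology.ringModIdeals (localCohomology.idealPowersDiagram J)).map f.unop
        = a ≫ b := by
      apply ModuleCat.hom_ext
      apply LinearMap.ext
      intro q
      obtain ⟨q, rfl⟩ := Submodule.Quotient.mk_surjective _ q
      rfl
    have hDf : D.map f = (Ext R (ModuleCat.{u} R) i).map b.op ≫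
        (Ext R (ModuleCat.{u} R) i).map a.op := by
      change (Ext R (ModuleCat.{u} R) i).map
        (((localCohomology.ringModIdeals
          (localCohomology.idealPowersDiagram J)).map f.unop).op) = _
      rw [hab]
      exact Functor.map_comp _ b.op a.op
    have h1 : (colimit.ι D j).app N = ((Ext R (ModuleCat.{u} R) i).map b.op).app N ≫
        ((Ext R (ModuleCat.{u} R) i).map a.op).app N ≫
          (colimit.ι D (Opposite.op (Opposite.op m))).app N := by
      rw [← colimit.w D f, hDf]
      rfl
    apply ModuleCat.hom_ext
    apply LinearMap.ext
    intro q
    change r • ((colimit.ι D j).app N).hom q = 0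
    have h2 : ((colimit.ι D j).app N).hom q =
        ((colimit.ι D (Opposite.op (Opposite.op m))).app N).hom
          ((((Ext R (ModuleCat.{u} R) i).map a.op).app N).hom
            ((((Ext R (ModuleCat.{u} R) i).map b.op).app N).hom q)) :=
      congrArg (fun φ => φ.hom q) h1
    rw [h2]
    refine (map_smul ((colimit.ι D (Opposite.op (Opposite.op m))).app N).hom r _).symm.trans ?_
    have h3 : r • (((Ext R (ModuleCat.{u} R) i).map a.op).app N).hom
        ((((Ext R (ModuleCat.{u} R) i).map b.op).app N).hom q) = 0 := by
      rw [← map_smul, hI, map_zero]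
    refine (congrArg ((colimit.ι D (Opposite.op (Opposite.op m))).app N).hom h3).trans ?_
    exact map_zero ((colimit.ι D (Opposite.op (Opposite.op m))).app N).hom
  have := congrArg (fun φ => φ.hom u) key
  exact this
end B

/-! ### Cell complexes labelled by squarefree monomials -/

section Mon

/-- A finite augmented cell complex labelled by squarefree monomials in the variables `V`.
A cell `j` has a homological degree `dim j` (one more than its topological dimension, so that the
empty cell `pt` has degree `0`) and the label `deg j`, a set of variables; `c i j` is the coefficient
of `i` in the boundary of `j`. -/
structure MonComplex (V : Type) [DecidableEq V] where
  cell : Type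
  [fin : Fintype cell]
  [dec : DecidableEq cell]
  dim : cell → ℕ
  deg : cell → Finset V
  c : cell → cell → ℤ
  dim_eq : ∀ i j, c i j ≠ 0 → dim j = dim i + 1
  deg_le : ∀ i j, c i j ≠ 0 → deg i ⊆ deg j
  c_sq : ∀ i k, ∑ j, c i j * c j k = 0
  pt : cell
  dim_pt : ∀ i, dim i = 0 ↔ i = pt
  deg_pt : deg pt = ∅
  c_pt : ∀ j, dim j = 1 → c pt j = 1

attribute [instance] MonComplex.fin MonComplex.dec

namespace MonComplex

variable {V : Type} [DecidableEq V]

/-- For every set `σ` of variables, the subcomplex of cells with label contained in `σ` is acyclic in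
positive degrees, with coefficients in `A`.  Degrees are not separated here: `z` may be an
inhomogeneous cycle. -/
def Exact (C : MonComplex V) (A : Type) [AddCommGroup A] : Prop :=
  ∀ (σ : Finset V) (z : C.cell → A), (∀ i, z i ≠ 0 → C.deg i ⊆ σ ∧ 1 ≤ C.dim i) →
    (∀ i, ∑ j, C.c i j • z j = 0) →
    ∃ w : C.cell → A, (∀ j, w j ≠ 0 → C.deg j ⊆ σ) ∧ ∀ i, ∑ j, C.c i j • w j = z i

/-- The mapping cone of multiplication by a further variable `v`: each cell is doubled, the second copy
having degree one higher and label enlarged by `v`. -/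
def cone (C : MonComplex V) (v : V) : MonComplex V where
  cell := C.cell ⊕ C.cell
  dim := Sum.elim C.dim fun i => C.dim i + 1
  deg := Sum.elim C.deg fun i => insert v (C.deg i)
  c := Sum.elim (fun i => Sum.elim (fun j => C.c i j) fun j => if i = j then 1 else 0)
    fun i => Sum.elim (fun _ => 0) fun j => -C.c i j
  dim_eq := by
    rintro (i | i) (j | j) h
    · exact C.dim_eq i j h
    · have : i = j := by by_contra hn; simp [hn] at h
      simp [this]
    · simp at h
    · have := C.dim_eq i j (by simpa using h)
      simp [this]
  deg_le := by
    rintro (i | i) (j | j) h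
    · exact C.deg_le i j h
    · have : i = j := by by_contra hn; simp [hn] at h
      simp [this]
    · simp at h
    · have := C.deg_le i j (by simpa using h)
      exact Finset.insert_subset_insert _ this
  c_sq := by
    rintro (i | i) (k | k)
    · simp [C.c_sq]
    · simp
    · simp
    · simp [C.c_sq]
  pt := Sum.inl C.pt
  dim_pt := by
    rintro (i | i)
    · simp [C.dim_pt]
    · simp
  deg_pt := C.deg_pt
  c_pt := by
    rintro (j | j) h
    · exact C.c_pt j h
    · have : j = C.pt := by rw [← C.dim_pt]; simpa using h
      simp [this]

lemma cone_sum_inl (C : MonComplex V) (v : V) {A : Type} [AddCommGroup A]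
    (w : (C.cone v).cell → A) (i : C.cell) :
    ∑ j, (C.cone v).c (Sum.inl i) j • w j =
      (∑ j, C.c i j • w (Sum.inl j)) + w (Sum.inr i) := by
  refine (Fintype.sum_sum_type _).trans ?_
  simp [MonComplex.cone]

lemma cone_sum_inr (C : MonComplex V) (v : V) {A : Type} [AddCommGroup A]
    (w : (C.cone v).cell → A) (i : C.cell) :
    ∑ j, (C.cone v).c (Sum.inr i) j • w j = -∑ j, C.c i j • w (Sum.inr j) := by
  refine (Fintype.sum_sum_type _).trans ?_
  simp [MonComplex.cone]

lemma Exact.cone {C : MonComplex V} {A : Type} [AddCommGroup A] (h : C.Exact A) (v : V) :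
    (C.cone v).Exact A := by
  intro σ z hz hcz
  have hl : ∀ i, (∑ j, C.c i j • z (Sum.inl j)) + z (Sum.inr i) = 0 := by
    intro i
    rw [← cone_sum_inl C v z i]
    exact hcz (Sum.inl i)
  by_cases hv : v ∈ σ
  · refine ⟨Sum.elim (fun _ => 0) fun j => z (Sum.inl j), ?_, ?_⟩
    · rintro (j | j) hj
      · simp at hj
      · exact Finset.insert_subset hv (hz (Sum.inl j) hj).1
    · rintro (i | i)
      · refine (cone_sum_inl C v _ i).trans ?_
        simp
      · refine (cone_sum_inr C v _ i).trans ?_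
        exact neg_eq_iff_add_eq_zero.2 (hl i)
  · have hr : ∀ i, z (Sum.inr i) = 0 := by
      intro i
      by_contra hi
      exact hv ((hz _ hi).1 (Finset.mem_insert_self _ _))
    obtain ⟨w, hw, hcw⟩ := h σ (fun i => z (Sum.inl i)) (fun i hi => hz _ hi)
      (fun i => by simpa [hr] using hl i)
    refine ⟨Sum.elim w fun _ => 0, ?_, ?_⟩
    · rintro (j | j) hj
      · exact hw j hj
      · simp at hj
    · rintro (i | i)
      · refine (cone_sum_inl C v _ i).trans ?_
        simpa using hcw i
      · refine (cone_sum_inr C v _ i).trans ?_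
        simp [hr]

/-! ### The free resolution over the power series ring -/

section Series

variable (A : Type) [CommRing A]

/-- The exponent vector of `(∏ k ∈ s, X k) ^ t`. -/
def expo (t : ℕ) (s : Finset V) : V →₀ ℕ := ∑ k ∈ s, Finsupp.single k t

lemma expo_apply (t : ℕ) (s : Finset V) (k : V) : expo t s k = if k ∈ s then t else 0 := by
  simp [expo, Finsupp.finsetSum_apply, Finsupp.single_apply]

lemma expo_sdiff (t : ℕ) {r s : Finset V} (h : r ⊆ s) : expo t r + expo t (s \ r) = expo t s := by
  rw [add_comm]; exact Finset.sum_sdiff h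

/-- The monomial `(∏ k ∈ s, X k) ^ t`. -/
def mon (t : ℕ) (s : Finset V) : MvPowerSeries V A := MvPowerSeries.monomial (expo t s) 1

lemma mon_mul (t : ℕ) {r s : Finset V} (h : r ⊆ s) : mon A t r * mon A t (s \ r) = mon A t s := by
  rw [mon, mon, mon, MvPowerSeries.monomial_mul_monomial, expo_sdiff t h, one_mul]

lemma mon_injective (t : ℕ) (s : Finset V) {f g : MvPowerSeries V A}
    (h : mon A t s * f = mon A t s * g) : f = g := by
  ext β
  have := congrArg (MvPowerSeries.coeff (expo t s + β)) h
  simpa [mon, MvPowerSeries.coeff_add_monomial_mul] using this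

lemma exists_mon_mul (t : ℕ) (s : Finset V) (f : MvPowerSeries V A)
    (h : ∀ β, MvPowerSeries.coeff β f ≠ 0 → expo t s ≤ β) : ∃ g, mon A t s * g = f := by
  classical
  let g : MvPowerSeries V A := fun β => MvPowerSeries.coeff (expo t s + β) f
  refine ⟨g, ?_⟩
  ext β
  rw [mon, MvPowerSeries.coeff_monomial_mul]
  split_ifs with hb
  · rw [one_mul]
    change MvPowerSeries.coeff (expo t s + (β - expo t s)) f = _
    rw [add_tsub_cancel_of_le hb]
  · by_contra hn
    exact hb (h β (Ne.symm hn))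

lemma coeff_mon_mul_ne (t : ℕ) (s : Finset V) (g : MvPowerSeries V A) (β : V →₀ ℕ)
    (h : MvPowerSeries.coeff β (mon A t s * g) ≠ 0) : expo t s ≤ β := by
  classical
  by_contra hb
  rw [mon, MvPowerSeries.coeff_monomial_mul, if_neg hb] at h
  exact h rfl

variable [Fintype V]

/-- The set of variables that occur in `β` with exponent at least `t`. -/
def supp (t : ℕ) (β : V →₀ ℕ) : Finset V := Finset.univ.filter fun k => t ≤ β k

lemma expo_le_iff (t : ℕ) (s : Finset V) (β : V →₀ ℕ) : expo t s ≤ β ↔ s ⊆ supp t β := by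
  constructor
  · intro h k hk
    have := h k
    rw [expo_apply, if_pos hk] at this
    simpa [supp] using this
  · intro h k
    rw [expo_apply]
    split_ifs with hk
    · simpa [supp] using h hk
    · exact Nat.zero_le _

end Series

variable (C : MonComplex V) (A : Type) [CommRing A] (t : ℕ)

/-- The free module on the cells of degree `n`. -/
abbrev F (n : ℕ) : Type := {i : C.cell // C.dim i = n} → MvPowerSeries V A

/-- The differential of the resolution: the entry at `(i, j)` is `c i j` times the `t`-th power of the
quotient of the labels. -/
def D (n : ℕ) : C.F A (n + 1) →ₗ[MvPowerSeries V A] C.F A n :=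
  Matrix.mulVecLin (Matrix.of fun i j => C.c i.1 j.1 • mon A t (C.deg j.1 \ C.deg i.1))

lemma D_apply (n : ℕ) (z : C.F A (n + 1)) (i) :
    C.D A t n z i = ∑ j, (C.c i.1 j.1 • mon A t (C.deg j.1 \ C.deg i.1)) * z j := rfl

/-- The embedding of `F n` into the families of power series indexed by all cells which multiplies each
coordinate by the `t`-th power of its label.  It turns `D` into the integer matrix `c` (`Phi_D`), so
that exactness can be tested one multidegree at a time. -/
def Phi (n : ℕ) (z : C.F A n) (i : C.cell) : MvPowerSeries V A :=
  if h : C.dim i = n then mon A t (C.deg i) * z ⟨i, h⟩ else 0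

lemma Phi_injective (n : ℕ) {z z' : C.F A n} (h : C.Phi A t n z = C.Phi A t n z') : z = z' := by
  funext ⟨i, hi⟩
  have := congrFun h i
  simp only [Phi, dif_pos hi] at this
  exact mon_injective A t _ this

lemma Phi_zero (n : ℕ) : C.Phi A t n 0 = 0 := by
  funext i; simp [Phi]

lemma Phi_D (n : ℕ) (z : C.F A (n + 1)) (i : C.cell) :
    ∑ j, C.c i j • C.Phi A t (n + 1) z j = C.Phi A t n (C.D A t n z) i := by
  have h1 : ∑ j, C.c i j • C.Phi A t (n + 1) z j =
      ∑ j : {j : C.cell // C.dim j = n + 1}, C.c i j.1 • (mon A t (C.deg j.1) * z j) := by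
    rw [← Finset.sum_filter_of_ne (p := fun j => C.dim j = n + 1)]
    · rw [Finset.sum_subtype (p := fun j => C.dim j = n + 1) _ (by simp)]
      refine Finset.sum_congr rfl fun j _ => ?_
      rw [Phi, dif_pos j.2]
    · intro j _ hj
      by_contra hn
      rw [Phi, dif_neg hn, smul_zero] at hj
      exact hj rfl
  rw [h1, Phi]
  split_ifs with hi
  · rw [D_apply, Finset.mul_sum]
    refine Finset.sum_congr rfl fun j _ => ?_
    by_cases hc : C.c i j.1 = 0
    · simp [hc]
    · rw [← mon_mul A t (C.deg_le i j.1 hc), mul_assoc, smul_mul_assoc, mul_smul_comm]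
  · refine Finset.sum_eq_zero fun j _ => ?_
    by_cases hc : C.c i j.1 = 0
    · simp [hc]
    · have := C.dim_eq i j.1 hc
      have := j.2
      omega

lemma c_c_zero (z : C.cell → MvPowerSeries V A) (i : C.cell) :
    ∑ j, C.c i j • ∑ k, C.c j k • z k = 0 := by
  simp_rw [Finset.smul_sum, smul_smul]
  rw [Finset.sum_comm]
  simp_rw [← Finset.sum_smul, C.c_sq, zero_smul, Finset.sum_const_zero]

lemma D_D (n : ℕ) : C.D A t n ∘ₗ C.D A t (n + 1) = 0 := by
  apply LinearMap.ext
  intro z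
  apply C.Phi_injective A t
  funext i
  change C.Phi A t n (C.D A t n (C.D A t (n + 1) z)) i = C.Phi A t n 0 i
  rw [Phi_zero, ← Phi_D]
  simp_rw [← Phi_D]
  exact C.c_c_zero A _ i

variable {C A} in
/-- In multidegree `β` only the cells with label in `supp t β` contribute, and `Exact` supplies a
preimage there; these preimages are the coefficients of a preimage in `F (n + 2)`. -/
lemma D_exact [Fintype V] (hC : C.Exact A) (n : ℕ) :
    LinearMap.ker (C.D A t n) ≤ LinearMap.range (C.D A t (n + 1)) := by
  intro z hz
  rw [LinearMap.mem_ker] at hz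
  have hcz : ∀ i, ∑ j, C.c i j • C.Phi A t (n + 1) z j = 0 := by
    intro i
    rw [Phi_D, hz, Phi_zero]; rfl
  have hex : ∀ β : V →₀ ℕ, ∃ w : C.cell → A, (∀ j, w j ≠ 0 → C.deg j ⊆ supp t β) ∧
      ∀ i, ∑ j, C.c i j • w j = MvPowerSeries.coeff β (C.Phi A t (n + 1) z i) := by
    intro β
    apply hC
    · intro i hi
      rw [Phi] at hi
      split_ifs at hi with hd
      · exact ⟨(expo_le_iff t _ β).1 (coeff_mon_mul_ne A t _ _ β hi), by omega⟩
      · simp at hi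
    · intro i
      have := congrArg (MvPowerSeries.coeff β) (hcz i)
      simpa only [map_sum, map_zsmul, map_zero] using this
  choose w hw hcw using hex
  let W : C.cell → MvPowerSeries V A := fun j β => w β j
  have hW : ∀ β j, MvPowerSeries.coeff β (W j) = w β j := fun _ _ => rfl
  have hdiv : ∀ j, ∃ g, mon A t (C.deg j) * g = W j := fun j =>
    exists_mon_mul A t _ _ fun β hb => (expo_le_iff t _ β).2 (hw β j hb)
  choose g hg using hdiv
  refine ⟨fun j => g j.1, ?_⟩
  apply C.Phi_injective A t
  funext i
  rw [← Phi_D]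
  by_cases hi : C.dim i = n + 1
  · ext β
    rw [← hcw β i, map_sum]
    refine Finset.sum_congr rfl fun j _ => ?_
    by_cases hc : C.c i j = 0
    · simp [hc]
    · have hj : C.dim j = n + 1 + 1 := by rw [C.dim_eq i j hc, hi]
      rw [Phi, dif_pos hj, hg, map_zsmul, hW]
  · rw [Phi, dif_neg hi]
    refine Finset.sum_eq_zero fun j _ => ?_
    by_cases hc : C.c i j = 0
    · simp [hc]
    · have hj := C.dim_eq i j hc
      rw [Phi, dif_neg (by omega), smul_zero]

/-- The ideal generated by the `t`-th powers of the labels of the vertices. -/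
def ideal : Ideal (MvPowerSeries V A) :=
  Ideal.span (Set.range fun j : {j : C.cell // C.dim j = 1} => mon A t (C.deg j.1))

lemma ideal_cone (v : V) :
    (C.cone v).ideal A t = C.ideal A t ⊔ Ideal.span {mon A t {v}} := by
  have hpt : insert v (C.deg C.pt) = {v} := by rw [C.deg_pt]; rfl
  apply le_antisymm
  · refine Ideal.span_le.2 ?_
    rintro _ ⟨⟨j | j, hj⟩, rfl⟩
    · exact Ideal.mem_sup_left (Ideal.subset_span ⟨⟨j, hj⟩, rfl⟩)
    · obtain rfl : j = C.pt := (C.dim_pt j).1 (Nat.succ_injective hj)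
      refine Ideal.mem_sup_right (Ideal.subset_span ?_)
      change mon A t (insert v (C.deg C.pt)) = mon A t {v}
      rw [hpt]
  · refine sup_le (Ideal.span_le.2 ?_) (Ideal.span_le.2 ?_)
    · rintro _ ⟨⟨j, hj⟩, rfl⟩
      exact Ideal.subset_span ⟨⟨Sum.inl j, hj⟩, rfl⟩
    · rintro _ rfl
      rw [← hpt]
      exact Ideal.subset_span ⟨⟨Sum.inr C.pt, congrArg (· + 1) ((C.dim_pt C.pt).2 rfl)⟩, rfl⟩

/-- The augmentation `F 0 → MvPowerSeries V A ⧸ ideal`; `F 0` is free on the cell `pt`. -/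
def aug : C.F A 0 →ₗ[MvPowerSeries V A] MvPowerSeries V A ⧸ C.ideal A t :=
  (Submodule.mkQ (C.ideal A t)) ∘ₗ LinearMap.proj ⟨C.pt, (C.dim_pt _).2 rfl⟩

lemma aug_surjective : Function.Surjective (C.aug A t) := by
  intro q
  obtain ⟨q, rfl⟩ := Submodule.Quotient.mk_surjective _ q
  exact ⟨fun _ => q, rfl⟩

lemma D_zero_apply (z : C.F A 1) :
    C.D A t 0 z ⟨C.pt, (C.dim_pt _).2 rfl⟩ = ∑ j, mon A t (C.deg j.1) * z j := by
  rw [D_apply]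
  refine Finset.sum_congr rfl fun j _ => ?_
  rw [C.c_pt j.1 j.2, C.deg_pt, one_smul, Finset.sdiff_empty]

lemma ker_aug : LinearMap.ker (C.aug A t) = LinearMap.range (C.D A t 0) := by
  ext z
  have : z ∈ LinearMap.ker (C.aug A t) ↔ z ⟨C.pt, (C.dim_pt _).2 rfl⟩ ∈ C.ideal A t := by
    rw [LinearMap.mem_ker]
    exact Submodule.Quotient.mk_eq_zero _
  rw [this, ideal, Ideal.mem_span_range_iff_exists_fun]
  constructor
  · rintro ⟨w, hw⟩
    refine ⟨w, ?_⟩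
    funext ⟨i, hi⟩
    obtain rfl := (C.dim_pt i).1 hi
    rw [D_zero_apply, ← hw]
    exact Finset.sum_congr rfl fun j _ => mul_comm _ _
  · rintro ⟨w, rfl⟩
    refine ⟨w, ?_⟩
    rw [D_zero_apply]
    exact Finset.sum_congr rfl fun j _ => mul_comm _ _

variable {C A} in
/-- Suppose that `j₀` is the only cell of degree `n + 1` and has the same label as the cell `i₀` of
degree `n`.  Then the entry of the differential at `(i₀, j₀)` is the integer `c i₀ j₀`, and this
integer kills `Extⁿ⁺¹`. -/
lemma smul_ext [Fintype V] (hC : C.Exact A) (n : ℕ) (i₀ j₀ : C.cell) (hi₀ : C.dim i₀ = n)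
    (hj₀ : ∀ j, C.dim j = n + 1 ↔ j = j₀) (hdeg : C.deg i₀ = C.deg j₀)
    (u : ((Ext (MvPowerSeries V A) (ModuleCat (MvPowerSeries V A)) (n + 1)).obj
      (Opposite.op (ModuleCat.of (MvPowerSeries V A) (MvPowerSeries V A ⧸ C.ideal A t)))).obj
      (ModuleCat.of (MvPowerSeries V A) (MvPowerSeries V A))) :
    ((C.c i₀ j₀ : ℤ) : MvPowerSeries V A) • u = 0 := by
  refine smul_ext_eq_zero (C.F A) (C.D A t) (C.D_D A t) (D_exact t hC) (C.aug A t)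
    (C.aug_surjective A t) (C.ker_aug A t) _ n _ (fun f => ?_) u
  let j' : {j : C.cell // C.dim j = n + 1} := ⟨j₀, (hj₀ j₀).2 rfl⟩
  refine ⟨f (Pi.single j' 1) • LinearMap.proj ⟨i₀, hi₀⟩, ?_⟩
  have huniq : ∀ j : {j : C.cell // C.dim j = n + 1}, j = j' := fun j =>
    Subtype.ext ((hj₀ j.1).1 j.2)
  apply LinearMap.ext
  intro z
  have hz : z = z j' • Pi.single j' 1 := by
    funext j
    rw [huniq j]; simp
  have hD : C.D A t n z ⟨i₀, hi₀⟩ = (C.c i₀ j₀ : MvPowerSeries V A) * z j' := by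
    rw [D_apply, Fintype.sum_eq_single j' (fun j hj => absurd (huniq j) hj)]
    have h1 : mon A t (∅ : Finset V) = 1 := by simp [mon, expo]
    simp only [j', hdeg, Finset.sdiff_self, h1, zsmul_eq_mul, mul_one]
  change (C.c i₀ j₀ : MvPowerSeries V A) * f z =
    f (Pi.single j' 1) * (C.D A t n z ⟨i₀, hi₀⟩)
  rw [hD]
  conv_lhs => rw [hz, map_smul, smul_eq_mul]
  ring

variable {C A} in
/-- The conclusion of `smul_ext` for all `t` passes to local cohomology, because the ideals `ideal A t`
are cofinal with the powers of `ideal A 1`. -/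
lemma smul_localCohomology [Fintype V] (hC : C.Exact A) (n : ℕ) (i₀ j₀ : C.cell)
    (hi₀ : C.dim i₀ = n)
    (hj₀ : ∀ j, C.dim j = n + 1 ↔ j = j₀) (hdeg : C.deg i₀ = C.deg j₀)
    (u : (localCohomology (C.ideal A 1) (n + 1)).obj
      (ModuleCat.of (MvPowerSeries V A) (MvPowerSeries V A))) :
    ((C.c i₀ j₀ : ℤ) : MvPowerSeries V A) • u = 0 := by
  have hpow : ∀ (k : ℕ) (s : Finset V), mon A k s = mon A 1 s ^ k := by
    intro k s
    rw [mon, mon, MvPowerSeries.monomial_pow, one_pow]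
    congr 2
    ext v
    simp [expo_apply]
  apply smul_localCohomology_eq_zero
  intro k
  have hrad : C.ideal A 1 ≤ (C.ideal A k).radical := by
    refine Ideal.span_le.2 ?_
    rintro _ ⟨j, rfl⟩
    exact ⟨k, by rw [← hpow]; exact Ideal.subset_span ⟨j, rfl⟩⟩
  obtain ⟨m, hm⟩ := Ideal.exists_pow_le_of_le_radical_of_fg hrad
    (Submodule.fg_span (Set.finite_range _))
  refine ⟨C.ideal A k, max k m, ?_, (Ideal.pow_le_pow_right (le_max_right _ _)).trans hm,
    le_max_left _ _, fun u => smul_ext k hC n i₀ j₀ hi₀ hj₀ hdeg u⟩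
  refine Ideal.span_le.2 ?_
  rintro _ ⟨j, rfl⟩
  change mon A k (C.deg j.1) ∈ C.ideal A 1 ^ k
  rw [hpow]
  exact Ideal.pow_mem_pow (Ideal.subset_span (Set.mem_range_self j)) k

end MonComplex
end Mon

/-! ### The labelled cell complex of the projective plane -/

section Base

/-- The labels of the 34 cells as bit masks: bit `k` stands for the variable `x k`.  Cell `0` is the
empty cell, `1, …, 10` are the vertices (the generators of `I`), `11, …, 25` the edges, `26, …, 31` the
pentagons, `32` the disk and `33` the 3-cell. -/
def degMask (j : Fin 34) : ℕ :=
  ([0, 7, 11, 21, 41, 49, 38, 26, 50, 28, 44, 15, 23, 39, 27, 43, 51, 29, 45, 53, 57, 30, 46, 54, 58,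
    60, 31, 47, 55, 59, 61, 62, 63, 63] : List ℕ).getD j 0

/-- The homological degrees of the 34 cells. -/
def cellDim (j : Fin 34) : ℕ :=
  ([0, 1, 1, 1, 1, 1, 1, 1, 1, 1, 1, 2, 2, 2, 2, 2, 2, 2, 2, 2, 2, 2, 2, 2, 2, 2, 3, 3, 3, 3, 3, 3, 3,
    4] : List ℕ).getD j 0

/-- The boundary of each cell, as a list of cells with coefficients. -/
def cCol (j : Fin 34) : List (Fin 34 × ℤ) :=
  ([[],
    [(0, 1)],
    [(0, 1)],
    [(0, 1)],
    [(0, 1)],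
    [(0, 1)],
    [(0, 1)],
    [(0, 1)],
    [(0, 1)],
    [(0, 1)],
    [(0, 1)],
    [(1, -1), (2, 1)],
    [(1, -1), (3, 1)],
    [(1, -1), (6, 1)],
    [(2, -1), (7, 1)],
    [(2, -1), (4, 1)],
    [(5, -1), (8, 1)],
    [(3, -1), (9, 1)],
    [(4, -1), (10, 1)],
    [(3, -1), (5, 1)],
    [(4, -1), (5, 1)],
    [(7, -1), (9, 1)],
    [(6, -1), (10, 1)],
    [(6, -1), (8, 1)],
    [(7, -1), (8, 1)],
    [(9, -1), (10, 1)],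
    [(11, 1), (12, -1), (14, 1), (17, -1), (21, 1)],
    [(11, 1), (13, -1), (15, 1), (18, 1), (22, -1)],
    [(12, 1), (13, -1), (16, 1), (19, 1), (23, -1)],
    [(14, 1), (15, -1), (16, -1), (20, -1), (24, 1)],
    [(17, 1), (18, -1), (19, -1), (20, 1), (25, 1)],
    [(21, 1), (22, -1), (23, 1), (24, -1), (25, 1)],
    [(11, 1), (13, -1), (14, 1), (21, 1), (22, -1), (25, 1)],
    [(26, -1), (27, -1), (28, -1), (29, -1), (30, -1), (31, -1), (32, 2)]] :
    List (List (Fin 34 × ℤ))).getD j []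

/-- Contracting homotopies, as an association list keyed by the bit masks of sets of variables.  Each
one sends a vertex to the path to it in a spanning tree of the vertices and edges present, and is
extended from there to the higher cells; its zero columns, and masks whose whole homotopy vanishes, are left out. -/
def hTable : List (ℕ × List (Fin 34 × List (Fin 34 × ℤ))) :=
  [(7, [(0, [(1, 1)])]),
   (11, [(0, [(2, 1)])]),
   (15, [(0, [(1, 1)]),
     (2, [(11, 1)])]),
   (21, [(0, [(3, 1)])]),
   (23, [(0, [(1, 1)]),
     (3, [(12, 1)])]),
   (26, [(0, [(7, 1)])]),
   (27, [(0, [(2, 1)]),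
     (7, [(14, 1)])]),
   (28, [(0, [(9, 1)])]),
   (29, [(0, [(3, 1)]),
     (9, [(17, 1)])]),
   (30, [(0, [(7, 1)]),
     (9, [(21, 1)])]),
   (31, [(0, [(1, 1)]),
     (2, [(11, 1)]),
     (3, [(12, 1)]),
     (7, [(11, 1), (14, 1)]),
     (9, [(12, 1), (17, 1)]),
     (21, [(26, 1)])]),
   (38, [(0, [(6, 1)])]),
   (39, [(0, [(1, 1)]),
     (6, [(13, 1)])]),
   (41, [(0, [(4, 1)])]),
   (43, [(0, [(2, 1)]),
     (4, [(15, 1)])]),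
   (44, [(0, [(10, 1)])]),
   (45, [(0, [(4, 1)]),
     (10, [(18, 1)])]),
   (46, [(0, [(6, 1)]),
     (10, [(22, 1)])]),
   (47, [(0, [(1, 1)]),
     (2, [(11, 1)]),
     (4, [(11, 1), (15, 1)]),
     (6, [(13, 1)]),
     (10, [(13, 1), (22, 1)]),
     (18, [(27, 1)])]),
   (49, [(0, [(5, 1)])]),
   (50, [(0, [(8, 1)])]),
   (51, [(0, [(5, 1)]),
     (8, [(16, 1)])]),
   (53, [(0, [(3, 1)]),
     (5, [(19, 1)])]),
   (54, [(0, [(6, 1)]),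
     (8, [(23, 1)])]),
   (55, [(0, [(1, 1)]),
     (3, [(12, 1)]),
     (5, [(12, 1), (19, 1)]),
     (6, [(13, 1)]),
     (8, [(13, 1), (23, 1)]),
     (16, [(28, 1)])]),
   (57, [(0, [(4, 1)]),
     (5, [(20, 1)])]),
   (58, [(0, [(7, 1)]),
     (8, [(24, 1)])]),
   (59, [(0, [(2, 1)]),
     (4, [(15, 1)]),
     (5, [(15, 1), (20, 1)]),
     (7, [(14, 1)]),
     (8, [(14, 1), (24, 1)]),
     (16, [(29, -1)])]),
   (60, [(0, [(9, 1)]),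
     (10, [(25, 1)])]),
   (61, [(0, [(3, 1)]),
     (4, [(19, 1), (20, -1)]),
     (5, [(19, 1)]),
     (9, [(17, 1)]),
     (10, [(17, 1), (25, 1)]),
     (18, [(30, -1)])]),
   (62, [(0, [(6, 1)]),
     (7, [(23, 1), (24, -1)]),
     (8, [(23, 1)]),
     (9, [(22, 1), (25, -1)]),
     (10, [(22, 1)]),
     (21, [(31, 1)])]),
   (63, [(0, [(1, 1)]),
     (2, [(11, 1)]),
     (3, [(12, 1)]),
     (4, [(11, 1), (15, 1)]),
     (5, [(12, 1), (19, 1)]),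
     (6, [(13, 1)]),
     (7, [(11, 1), (14, 1)]),
     (8, [(13, 1), (23, 1)]),
     (9, [(12, 1), (17, 1)]),
     (10, [(13, 1), (22, 1)]),
     (16, [(28, 1)]),
     (18, [(27, 1)]),
     (20, [(26, 1), (27, 1), (30, 1), (32, -1)]),
     (21, [(26, 1)]),
     (24, [(26, 1), (27, 1), (28, 1), (29, 1), (30, 1), (32, -1)]),
     (25, [(26, -1), (32, 1)]),
     (31, [(33, -1)])])]

/-- The value at the cell `j` of the homotopy for the set of variables with mask `s`. -/
def hCol (s : ℕ) (j : Fin 34) : List (Fin 34 × ℤ) :=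
  (((hTable.lookup s).getD []).lookup j).getD []

/-- The coefficient of the cell `i` in a sparse chain; repeated entries add up. -/
def ev (l : List (Fin 34 × ℤ)) (i : Fin 34) : ℤ :=
  (l.map fun p => if p.1 = i then p.2 else 0).sum

/-- The image of a sparse chain under the linear map with columns `M`. -/
def act (M : Fin 34 → List (Fin 34 × ℤ)) (l : List (Fin 34 × ℤ)) : List (Fin 34 × ℤ) :=
  l.flatMap fun p => (M p.1).map fun q => (q.1, p.2 * q.2)

lemma ev_append (l l' : List (Fin 34 × ℤ)) (i : Fin 34) : ev (l ++ l') i = ev l i + ev l' i := by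
  simp [ev]

lemma ev_cons (p : Fin 34 × ℤ) (l : List (Fin 34 × ℤ)) (i : Fin 34) :
    ev (p :: l) i = (if p.1 = i then p.2 else 0) + ev l i := by
  simp [ev]

lemma ev_map (a : ℤ) (l : List (Fin 34 × ℤ)) (i : Fin 34) :
    ev (l.map fun q => (q.1, a * q.2)) i = a * ev l i := by
  induction l with
  | nil => simp [ev]
  | cons p l ih => rw [List.map_cons, ev_cons, ev_cons, ih]; split_ifs <;> ring

lemma ev_act (M : Fin 34 → List (Fin 34 × ℤ)) (l : List (Fin 34 × ℤ)) (i : Fin 34) :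
    ev (act M l) i = ∑ k, ev (M k) i * ev l k := by
  induction l with
  | nil => simp [ev, act]
  | cons p l ih =>
    change ev (((M p.1).map fun q => (q.1, p.2 * q.2)) ++ act M l) i = _
    rw [ev_append, ih, ev_map]
    simp only [ev_cons, mul_add, Finset.sum_add_distrib, mul_ite, mul_zero,
      Finset.sum_ite_eq, Finset.mem_univ, if_true]
    rw [mul_comm]

lemma exists_mem_of_ev_ne_zero {l : List (Fin 34 × ℤ)} {i : Fin 34} (h : ev l i ≠ 0) :
    ∃ p ∈ l, p.1 = i := by
  by_contra! hn
  refine h (List.sum_eq_zero fun a ha => ?_)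
  obtain ⟨p, hp, rfl⟩ := List.mem_map.1 ha
  exact if_neg (hn p hp)

/-- A sparse chain vanishes if its coefficients at the cells listed in it do; this keeps the finite
checks below small. -/
lemma ev_eq_zero {l : List (Fin 34 × ℤ)} (h : ∀ p ∈ l, ev l p.1 = 0) (i : Fin 34) :
    ev l i = 0 := by
  by_contra hi
  obtain ⟨p, hp, rfl⟩ := exists_mem_of_ev_ne_zero hi
  exact hi (h p hp)

lemma degMask_lt (j : Fin 34) : degMask j < 64 := by
  revert j; decide +kernel

lemma cCol_spec : ∀ j, ∀ p ∈ cCol j, cellDim j = cellDim p.1 + 1 ∧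
    degMask p.1 &&& degMask j = degMask p.1 := by
  decide +kernel

lemma cCol_sq : ∀ k, ∀ p ∈ act cCol (cCol k), ev (act cCol (cCol k)) p.1 = 0 := by
  decide +kernel

lemma hCol_spec : ∀ s : Fin 64, ∀ j, ∀ p ∈ hCol s j, degMask p.1 &&& s = degMask p.1 := by
  decide +kernel

/-- The identity `c h + h c = 1` on the cells of positive degree with label in `s`. -/
lemma hCol_homotopy : ∀ s : Fin 64, ∀ j, 1 ≤ cellDim j → degMask j &&& s = degMask j →
    ∀ p ∈ act cCol (hCol s j) ++ (act (hCol s) (cCol j) ++ [(j, -1)]),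
      ev (act cCol (hCol s j) ++ (act (hCol s) (cCol j) ++ [(j, -1)])) p.1 = 0 := by
  decide +kernel

/-- The label of a cell as a set of variables among all twelve. -/
def cellDeg (j : Fin 34) : Finset (Fin 12) :=
  Finset.univ.filter fun k => (degMask j).testBit k.val

lemma cellDeg_subset {i j : Fin 34} (h : degMask i &&& degMask j = degMask i) :
    cellDeg i ⊆ cellDeg j := by
  intro k hk
  simp only [cellDeg, Finset.mem_filter, Finset.mem_univ, true_and] at hk ⊢
  rw [← h, Nat.testBit_and, Bool.and_eq_true] at hk
  exact hk.2

/-- The bit mask of `σ ∩ {x₁, …, x₆}`. -/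
def setMask (σ : Finset (Fin 12)) : Fin 64 :=
  ⟨Nat.ofBits fun k : Fin 6 => decide (k.castLE (by norm_num : 6 ≤ 12) ∈ σ),
    Nat.ofBits_lt_two_pow _⟩

lemma testBit_setMask (σ : Finset (Fin 12)) {k : ℕ} (hk : k < 6) :
    (setMask σ : ℕ).testBit k = decide ((⟨k, by omega⟩ : Fin 12) ∈ σ) := by
  simp only [setMask]
  rw [Nat.testBit_ofBits_lt _ _ hk]
  rfl

lemma cellDeg_subset_iff (j : Fin 34) (σ : Finset (Fin 12)) :
    cellDeg j ⊆ σ ↔ degMask j &&& setMask σ = degMask j := by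
  have hlt : ∀ k, 6 ≤ k → (degMask j).testBit k = false := fun k hk =>
    Nat.testBit_lt_two_pow
      ((degMask_lt j).trans_le (Nat.pow_le_pow_right (by norm_num) hk : 2 ^ 6 ≤ 2 ^ k))
  constructor
  · intro h
    apply Nat.eq_of_testBit_eq
    intro k
    rw [Nat.testBit_and]
    by_cases hk : k < 6
    · rw [testBit_setMask σ hk]
      cases hb : (degMask j).testBit k
      · rfl
      · have : (⟨k, by omega⟩ : Fin 12) ∈ cellDeg j := by simp [cellDeg, hb]
        simp [h this]
    · simp [hlt k (by omega)]
  · intro h k hk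
    simp only [cellDeg, Finset.mem_filter, Finset.mem_univ, true_and] at hk
    have hk6 : k.val < 6 := by
      by_contra hn
      rw [hlt _ (by omega)] at hk
      simp at hk
    rw [← h, Nat.testBit_and, Bool.and_eq_true, testBit_setMask σ hk6] at hk
    exact of_decide_eq_true hk.2

/-- The labelled cell complex that resolves the ideal `I`: the cell structure on `ℝP²` dual to its
six-vertex triangulation, with a disk and a 3-cell added. -/
def base : MonComplex (Fin 12) where
  cell := Fin 34
  dim := cellDim
  deg := cellDeg
  c i j := ev (cCol j) i
  dim_eq := by
    intro i j h
    obtain ⟨p, hp, rfl⟩ := exists_mem_of_ev_ne_zero h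
    exact (cCol_spec j p hp).1
  deg_le := by
    intro i j h
    obtain ⟨p, hp, rfl⟩ := exists_mem_of_ev_ne_zero h
    exact cellDeg_subset (cCol_spec j p hp).2
  c_sq i k := by rw [← ev_act]; exact ev_eq_zero (cCol_sq k) i
  pt := 0
  dim_pt := by decide +kernel
  deg_pt := by decide +kernel
  c_pt := by decide +kernel

/-- The preimage of a cycle `z` is `h z`, where `h` is the homotopy for `σ`. -/
lemma base_exact (A : Type) [AddCommGroup A] : base.Exact A := by
  intro σ (z : Fin 34 → A) hz hcz
  replace hz : ∀ j, z j ≠ 0 → degMask j &&& setMask σ = degMask j ∧ 1 ≤ cellDim j :=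
    fun j hj => ⟨(cellDeg_subset_iff j σ).1 (hz j hj).1, (hz j hj).2⟩
  replace hcz : ∀ i, ∑ j, ev (cCol j) i • z j = 0 := hcz
  refine ⟨fun k => ∑ j : Fin 34, ev (hCol (setMask σ) j) k • z j, ?_, ?_⟩
  · intro k hk
    refine (cellDeg_subset_iff k σ).2 ?_
    obtain ⟨j, -, hj⟩ := Finset.exists_ne_zero_of_sum_ne_zero hk
    obtain ⟨p, hp, rfl⟩ := exists_mem_of_ev_ne_zero (left_ne_zero_of_smul hj)
    exact hCol_spec _ j p hp
  · intro (i : Fin 34)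
    have swap : ∀ M N : Fin 34 → List (Fin 34 × ℤ),
        ∑ k, ev (M k) i • ∑ j, ev (N j) k • z j = ∑ j, ev (act M (N j)) i • z j := by
      intro M N
      simp_rw [ev_act, Finset.sum_smul, Finset.smul_sum, smul_smul]
      exact Finset.sum_comm
    have h2 := swap (hCol (setMask σ)) cCol
    simp only [hcz, smul_zero, Finset.sum_const_zero] at h2
    refine (swap cCol (hCol (setMask σ))).trans ?_
    have key : ∀ j, ev (act cCol (hCol (setMask σ) j)) i • z j +
        ev (act (hCol (setMask σ)) (cCol j)) i • z j = (if j = i then 1 else 0 : ℤ) • z j := by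
      intro j
      by_cases hj : z j = 0
      · simp [hj]
      · have := ev_eq_zero (hCol_homotopy _ j (hz j hj).2 (hz j hj).1) i
        rw [ev_append, ev_append, ev_cons] at this
        rw [← add_smul]
        congr 1
        have h0 : ev [] i = 0 := rfl
        rw [h0] at this
        simp only at this
        split_ifs at this ⊢ <;> linarith
    rw [← add_zero (∑ j, _), h2, ← Finset.sum_add_distrib, Finset.sum_congr rfl fun j _ => key j]
    simp
end Base

/-! ### The ideal `J` -/

section Final

/-- The complex resolving `J`: two cones, on `y 0` and `y 1`, which are the variables `6` and `7` of the
twelve. -/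
def total : MonComplex (Fin 12) := (base.cone 6).cone 7

lemma mon_eq (s : Finset (Fin 12)) :
    MonComplex.mon ℤ_[2] 1 s = ∏ k ∈ s, (MvPowerSeries.X k : S) := by
  classical
  induction s using Finset.induction_on with
  | empty => simp [MonComplex.mon, MonComplex.expo]
  | insert k s hk ih =>
    rw [Finset.prod_insert hk, ← ih, MvPowerSeries.X, MonComplex.mon, MonComplex.mon,
      MvPowerSeries.monomial_mul_monomial, one_mul, MonComplex.expo, Finset.sum_insert hk]
    rfl

lemma dim_one : ∀ j, cellDim j = 1 ↔ j = 1 ∨ j = 2 ∨ j = 3 ∨ j = 4 ∨ j = 5 ∨ j = 6 ∨ j = 7 ∨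
    j = 8 ∨ j = 9 ∨ j = 10 := by
  decide +kernel

lemma mon_triple (j : Fin 34) (a b c : Fin 6)
    (h : cellDeg j = {a.castAdd 6, b.castAdd 6, c.castAdd 6} ∧ a ≠ b ∧ a ≠ c ∧ b ≠ c := by
      decide +kernel) :
    MonComplex.mon ℤ_[2] 1 (cellDeg j) = x a * x b * x c := by
  obtain ⟨h, hab, hac, hbc⟩ := h
  have inj := Fin.castAdd_injective 6 6
  rw [mon_eq, h, Finset.prod_insert (by simp [inj.eq_iff, hab, hac]),
    Finset.prod_insert (by simp [inj.eq_iff, hbc]), Finset.prod_singleton, mul_assoc]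
  rfl

lemma ideal_base : base.ideal ℤ_[2] 1 = Ideal.span Igens := by
  let m (j : Fin 34) : S := MonComplex.mon ℤ_[2] 1 (cellDeg j)
  have hm : m 1 = x 0 * x 1 * x 2 ∧
      m 2 = x 0 * x 1 * x 3 ∧
      m 3 = x 0 * x 2 * x 4 ∧
      m 4 = x 0 * x 3 * x 5 ∧
      m 5 = x 0 * x 4 * x 5 ∧
      m 6 = x 1 * x 2 * x 5 ∧
      m 7 = x 1 * x 3 * x 4 ∧
      m 8 = x 1 * x 4 * x 5 ∧
      m 9 = x 2 * x 3 * x 4 ∧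
      m 10 = x 2 * x 3 * x 5 :=
    ⟨mon_triple 1 0 1 2,
    mon_triple 2 0 1 3,
    mon_triple 3 0 2 4,
    mon_triple 4 0 3 5,
    mon_triple 5 0 4 5,
    mon_triple 6 1 2 5,
    mon_triple 7 1 3 4,
    mon_triple 8 1 4 5,
    mon_triple 9 2 3 4,
    mon_triple 10 2 3 5⟩
  obtain ⟨h1, h2, h3, h4, h5, h6, h7, h8, h9, h10⟩ := hm
  have hr : Igens = Set.image m {1, 2, 3, 4, 5, 6, 7, 8, 9, 10} := by
    simp only [Set.image_insert_eq, Set.image_singleton, h1, h2, h3, h4, h5, h6, h7, h8, h9, h10,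
      Igens]
  rw [hr, MonComplex.ideal]
  congr 1
  ext f
  constructor
  · rintro ⟨⟨j, hj⟩, rfl⟩
    exact ⟨j, (dim_one j).1 hj, rfl⟩
  · rintro ⟨j, hj, rfl⟩
    exact ⟨⟨j, (dim_one j).2 hj⟩, rfl⟩

lemma total_ideal : total.ideal ℤ_[2] 1 = J := by
  rw [total, MonComplex.ideal_cone, MonComplex.ideal_cone, ideal_base, mon_eq, mon_eq,
    Finset.prod_singleton, Finset.prod_singleton, sup_assoc, ← Ideal.span_union]
  rfl

lemma dim_le : ∀ j, cellDim j ≤ 4 ∧ (cellDim j = 4 ↔ j = 33) := by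
  decide +kernel

lemma total_dim_six : ∀ j : (Fin 34 ⊕ Fin 34) ⊕ (Fin 34 ⊕ Fin 34),
    total.dim j = 5 + 1 ↔ j = (Sum.inr (Sum.inr 33) : (Fin 34 ⊕ Fin 34) ⊕ (Fin 34 ⊕ Fin 34)) := by
  have aux : ∀ (j : Fin 34) (e : ℕ), e ≤ 1 → cellDim j + e ≠ 6 := fun j e he => by
    have := (dim_le j).1
    omega
  rintro ((j | j) | (j | j))
  · exact iff_of_false (aux j 0 zero_le_one) (by simp)
  · exact iff_of_false (aux j 1 le_rfl) (by simp)
  · exact iff_of_false (aux j 1 le_rfl) (by simp)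
  · change cellDim j + 1 + 1 = 6 ↔ _
    simpa using (dim_le j).2

end Final

end RP2

theorem two_smul_H6_eq_zero
    (u : (localCohomology J 6).obj (ModuleCat.of S S)) :
    (2 : S) • u = 0 := by
  have key := RP2.MonComplex.smul_localCohomology (C := RP2.total) (A := ℤ_[2])
    (((RP2.base_exact _).cone 6).cone 7) 5 (Sum.inr (Sum.inr (32 : Fin 34)))
    (Sum.inr (Sum.inr (33 : Fin 34))) (by decide +kernel) RP2.total_dim_six (by decide +kernel)
  rw [RP2.total_ideal] at key
  have h2 : RP2.total.c (Sum.inr (Sum.inr (32 : Fin 34))) (Sum.inr (Sum.inr (33 : Fin 34))) =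
      2 := by
    decide +kernel
  rw [h2] at key
  exact_mod_cast key u
end
end
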